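/- arXiv:math/0406574 — 2 statements merged into one kernel-verified Lean document; each statement's English description precedes it below -/
import Mathlib

section
/- Let n ≥ 2 and let ν = (ν_n,…,ν_1), μ = (μ_n,…,μ_1) ∈ ℤ^n with ν_n ≥ … ≥ ν_1 ≥ 0 and μ_n ≥ … ≥ μ_1 ≥ 0. Assume μ_n ≥ ν_{n−1} and ν_n − μ_n ≥ 0, and set l = ν_n − μ_n, ν' = (ν_{n−1},…,ν_1), μ' = (μ_{n−1},…,μ_1). Then K^{B_n}_{ν,μ}(q) = q^l · Σ_{(r,m) ∈ ℕ², r + 2m = l} Σ_λ b^λ_{ν',r} · K^{B_{n−1}}_{λ,μ'}(q), where the inner sum is over all dominant weights λ of type B_{n−1} with integer coordinates (only finitely many terms are nonzero). -/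
open scoped BigOperators

noncomputable section

/-- The `q`-analogue of Kostant's partition function attached to the finite set `R`
of positive roots: the coefficient of `q^k` is the number of families
`(m_α)_{α ∈ R}` of nonnegative integers with `∑ m_α = k` and `∑ m_α • α = β`. -/
def kostantQ {n : ℕ} (R : Finset (Fin n → ℚ)) (β : Fin n → ℚ) : PowerSeries ℤ :=
  PowerSeries.mk fun k =>
    (Nat.card {m : {α // α ∈ R} → ℕ //
      (∑ α, m α) = k ∧ (∑ α, (m α : ℚ) • (α : Fin n → ℚ)) = β} : ℤ)

/-- Positive roots of type `D_n` : `e_i - e_j` and `e_i + e_j` for `j < i`. -/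
def rootsD (n : ℕ) : Finset (Fin n → ℚ) :=
  ((Finset.univ : Finset (Fin n × Fin n)).filter fun p => p.2 < p.1).image
      (fun p => Pi.single p.1 (1 : ℚ) - Pi.single p.2 1) ∪
  ((Finset.univ : Finset (Fin n × Fin n)).filter fun p => p.2 < p.1).image
      (fun p => Pi.single p.1 (1 : ℚ) + Pi.single p.2 1)

/-- Positive roots of type `B_n`. -/
def rootsB (n : ℕ) : Finset (Fin n → ℚ) :=
  rootsD n ∪ (Finset.univ : Finset (Fin n)).image fun i => Pi.single i (1 : ℚ)

/-- Positive roots of type `C_n`. -/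
def rootsC (n : ℕ) : Finset (Fin n → ℚ) :=
  rootsD n ∪ (Finset.univ : Finset (Fin n)).image fun i => Pi.single i (2 : ℚ)

/-- Positive roots of type `A_{n-1}` : `e_i - e_j` for `j < i`. -/
def rootsA (n : ℕ) : Finset (Fin n → ℚ) :=
  ((Finset.univ : Finset (Fin n × Fin n)).filter fun p => p.2 < p.1).image
      fun p => Pi.single p.1 (1 : ℚ) - Pi.single p.2 1

/-- `ρ` of type `B_n` : `e_i`-coordinate `i - 1/2` (`0`-based index `i ↦ i + 1/2`). -/
def rhoB (n : ℕ) : Fin n → ℚ := fun i => ((i : ℕ) : ℚ) + 1/2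

/-- `ρ` of type `C_n` : `e_i`-coordinate `i`. -/
def rhoC (n : ℕ) : Fin n → ℚ := fun i => ((i : ℕ) : ℚ) + 1

/-- `ρ` of type `D_n` : `e_i`-coordinate `i - 1`. -/
def rhoD (n : ℕ) : Fin n → ℚ := fun i => ((i : ℕ) : ℚ)

/-- `ρ` of type `A_{n-1}` : `e_i`-coordinate `i - 1`. -/
def rhoA (n : ℕ) : Fin n → ℚ := fun i => ((i : ℕ) : ℚ)

/-- The signed permutation `(σ, ε)` acting on a weight: it maps `e_j` to `± e_{σ j}`. -/
def wAct {n : ℕ} (σ : Equiv.Perm (Fin n)) (ε : Fin n → Bool) (β : Fin n → ℚ) :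
    Fin n → ℚ := fun i => (if ε i then -1 else 1) * β (σ⁻¹ i)

/-- The determinant (sign) of the signed permutation `(σ, ε)`. -/
def wDet {n : ℕ} (σ : Equiv.Perm (Fin n)) (ε : Fin n → Bool) : ℤ :=
  (Equiv.Perm.sign σ : ℤ) * ∏ i, (if ε i then (-1 : ℤ) else 1)

/-- Kostka-Foulkes polynomial of type `B_n`, as a power series in `q`. -/
def KB (n : ℕ) (lam mu : Fin n → ℚ) : PowerSeries ℤ :=
  ∑ σ : Equiv.Perm (Fin n), ∑ ε : Fin n → Bool,
    wDet σ ε • kostantQ (rootsB n) (wAct σ ε (lam + rhoB n) - (mu + rhoB n))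

/-- Kostka-Foulkes polynomial of type `C_n`, as a power series in `q`. -/
def KC (n : ℕ) (lam mu : Fin n → ℚ) : PowerSeries ℤ :=
  ∑ σ : Equiv.Perm (Fin n), ∑ ε : Fin n → Bool,
    wDet σ ε • kostantQ (rootsC n) (wAct σ ε (lam + rhoC n) - (mu + rhoC n))

/-- Kostka-Foulkes polynomial of type `D_n`, as a power series in `q` (the Weyl group
consists of the signed permutations with an even number of sign changes). -/
def KD (n : ℕ) (lam mu : Fin n → ℚ) : PowerSeries ℤ :=
  ∑ σ : Equiv.Perm (Fin n), ∑ ε : Fin n → Bool,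
    if (∏ i, (if ε i then (-1 : ℤ) else 1)) = 1 then
      wDet σ ε • kostantQ (rootsD n) (wAct σ ε (lam + rhoD n) - (mu + rhoD n))
    else 0

/-- Kostka-Foulkes polynomial of type `A_{n-1}`, as a power series in `q`. -/
def KA (n : ℕ) (lam mu : Fin n → ℚ) : PowerSeries ℤ :=
  ∑ σ : Equiv.Perm (Fin n),
    (Equiv.Perm.sign σ : ℤ) •
      kostantQ (rootsA n) ((fun i => (lam + rhoA n) (σ⁻¹ i)) - (mu + rhoA n))

/-- Dominant weight of type `B_n` : `λ_n ≥ ⋯ ≥ λ_1 ≥ 0`, all coordinates in `ℤ`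
or all in `ℤ + 1/2`. -/
def DominantB {n : ℕ} (lam : Fin n → ℚ) : Prop :=
  Monotone lam ∧ (∀ i, 0 ≤ lam i) ∧
    ((∀ i, ∃ z : ℤ, lam i = z) ∨ (∀ i, ∃ z : ℤ, lam i = z + 1/2))

/-- Dominant weight of type `C_n` : `λ_n ≥ ⋯ ≥ λ_1 ≥ 0`, integer coordinates. -/
def DominantC {n : ℕ} (lam : Fin n → ℚ) : Prop :=
  Monotone lam ∧ (∀ i, 0 ≤ lam i) ∧ ∀ i, ∃ z : ℤ, lam i = z

/-- Dominant weight of type `D_n` : `λ_n ≥ ⋯ ≥ λ_2 ≥ |λ_1|`, all coordinates in `ℤ`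
or all in `ℤ + 1/2`. -/
def DominantD {n : ℕ} (lam : Fin n → ℚ) : Prop :=
  (∀ i j : Fin n, i ≤ j → 0 < (i : ℕ) → lam i ≤ lam j) ∧
  (∀ h : 0 < n, ∀ j : Fin n, 0 < (j : ℕ) → |lam ⟨0, h⟩| ≤ lam j) ∧
  ((∀ i, ∃ z : ℤ, lam i = z) ∨ (∀ i, ∃ z : ℤ, lam i = z + 1/2))

/-- Restriction of a weight of rank `n` to the first `n - 1` coordinates
(i.e. forgetting the `e_n`-coordinate). -/
def restrict1 {n : ℕ} (lam : Fin n → ℚ) : Fin (n - 1) → ℚ :=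
  fun i => lam ⟨(i : ℕ), by have := i.2; omega⟩

/-- Pieri number `b^λ_{γ,r}` of type `B_n`. -/
def bPieri {m : ℕ} (γ lam : Fin m → ℚ) (r : ℕ) : ℕ :=
  Nat.card {t : (Fin m → ℕ) × (Fin m → ℕ) × Bool //
    ((cond t.2.2 1 0) + ∑ i, (t.1 i + t.2.1 i)) = r ∧
    (∀ i, ((t.2.1 i : ℚ) - (t.1 i : ℚ)) = lam i - γ i) ∧
    (∀ i : Fin m, ∀ h : (i : ℕ) + 1 < m,
      lam i ≤ lam ⟨(i : ℕ) + 1, h⟩ - (t.2.1 ⟨(i : ℕ) + 1, h⟩ : ℚ)) ∧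
    (∀ i : Fin m, ∀ h : (i : ℕ) + 1 < m,
      lam i + (t.1 i : ℚ) - (t.2.1 i : ℚ) ≤
        lam ⟨(i : ℕ) + 1, h⟩ - (t.2.1 ⟨(i : ℕ) + 1, h⟩ : ℚ)) ∧
    (∀ h : 0 < m,
      if t.2.2 then (0 : ℚ) < lam ⟨0, h⟩ - (t.2.1 ⟨0, h⟩ : ℚ)
      else (0 : ℚ) ≤ lam ⟨0, h⟩ - (t.2.1 ⟨0, h⟩ : ℚ))}

/-- Pieri number `c^λ_{γ,r}` of type `C_n`. -/
def cPieri {m : ℕ} (γ lam : Fin m → ℚ) (r : ℕ) : ℕ :=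
  Nat.card {t : (Fin m → ℕ) × (Fin m → ℕ) //
    (∑ i, (t.1 i + t.2 i)) = r ∧
    (∀ i, ((t.2 i : ℚ) - (t.1 i : ℚ)) = lam i - γ i) ∧
    (∀ i : Fin m, ∀ h : (i : ℕ) + 1 < m,
      lam i ≤ lam ⟨(i : ℕ) + 1, h⟩ - (t.2 ⟨(i : ℕ) + 1, h⟩ : ℚ)) ∧
    (∀ i : Fin m, ∀ h : (i : ℕ) + 1 < m,
      lam i + (t.1 i : ℚ) - (t.2 i : ℚ) ≤
        lam ⟨(i : ℕ) + 1, h⟩ - (t.2 ⟨(i : ℕ) + 1, h⟩ : ℚ)) ∧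
    (∀ h : 0 < m, (0 : ℚ) ≤ lam ⟨0, h⟩ - (t.2 ⟨0, h⟩ : ℚ))}

/-- Pieri number `d^λ_{γ,r}` of type `D_n`. -/
def dPieri {m : ℕ} (γ lam : Fin m → ℚ) (r : ℕ) : ℕ :=
  Nat.card {t : (Fin m → ℕ) × (Fin m → ℕ) //
    (∀ h : 0 < m, min (t.1 ⟨0, h⟩) (t.2 ⟨0, h⟩) = 0) ∧
    (∑ i, (t.1 i + t.2 i)) = r ∧
    (∀ i, ((t.2 i : ℚ) - (t.1 i : ℚ)) = lam i - γ i) ∧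
    (∀ h : 1 < m,
      (t.1 ⟨0, by omega⟩ = 0 →
        lam ⟨0, by omega⟩ ≤ lam ⟨1, h⟩ - (t.2 ⟨1, h⟩ : ℚ)) ∧
      (0 < t.1 ⟨0, by omega⟩ →
        -lam ⟨0, by omega⟩ ≤ lam ⟨1, h⟩ - (t.2 ⟨1, h⟩ : ℚ))) ∧
    (∀ i : Fin m, 1 ≤ (i : ℕ) → ∀ h : (i : ℕ) + 1 < m,
      lam i ≤ lam ⟨(i : ℕ) + 1, h⟩ - (t.2 ⟨(i : ℕ) + 1, h⟩ : ℚ)) ∧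
    (∀ i : Fin m, 1 ≤ (i : ℕ) → ∀ h : (i : ℕ) + 1 < m,
      lam i + (t.1 i : ℚ) - (t.2 i : ℚ) ≤
        lam ⟨(i : ℕ) + 1, h⟩ - (t.2 ⟨(i : ℕ) + 1, h⟩ : ℚ)) ∧
    (∀ h : 1 < m,
      (t.1 ⟨0, by omega⟩ = 0 → 0 ≤ γ ⟨0, by omega⟩ →
        lam ⟨0, by omega⟩ - (t.2 ⟨0, by omega⟩ : ℚ) ≤ lam ⟨1, h⟩ - (t.2 ⟨1, h⟩ : ℚ)) ∧
      (t.2 ⟨0, by omega⟩ = 0 → 0 ≤ γ ⟨0, by omega⟩ →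
        lam ⟨0, by omega⟩ + (t.1 ⟨0, by omega⟩ : ℚ) ≤ lam ⟨1, h⟩ - (t.2 ⟨1, h⟩ : ℚ)) ∧
      (t.2 ⟨0, by omega⟩ = 0 → γ ⟨0, by omega⟩ < 0 →
        -lam ⟨0, by omega⟩ - (t.1 ⟨0, by omega⟩ : ℚ) ≤ lam ⟨1, h⟩ - (t.2 ⟨1, h⟩ : ℚ)) ∧
      (t.1 ⟨0, by omega⟩ = 0 → γ ⟨0, by omega⟩ < 0 →
        -lam ⟨0, by omega⟩ + (t.2 ⟨0, by omega⟩ : ℚ) ≤ lam ⟨1, h⟩ - (t.2 ⟨1, h⟩ : ℚ)))}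

/-- The monomial `x^β = ∏ y_i ^ (2 β_i)` in the Laurent polynomial ring
`ℤ[y_1^{±1}, …, y_n^{±1}]`, realized as the group algebra of `ℤ^n`. -/
def xpow {n : ℕ} (β : Fin n → ℚ) : AddMonoidAlgebra ℤ (Fin n → ℤ) :=
  AddMonoidAlgebra.single (fun i => ⌊2 * β i⌋) 1

/-- The Weyl alternant `a_β = ∑_{σ ∈ W_{B_n}} det σ · x^{σ β}` of type `B_n`. -/
def altB {n : ℕ} (β : Fin n → ℚ) : AddMonoidAlgebra ℤ (Fin n → ℤ) :=
  ∑ σ : Equiv.Perm (Fin n), ∑ ε : Fin n → Bool, wDet σ ε • xpow (wAct σ ε β)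

/-- The Weyl alternant `a_β = ∑_{σ ∈ W_{D_n}} det σ · x^{σ β}` of type `D_n`. -/
def altD {n : ℕ} (β : Fin n → ℚ) : AddMonoidAlgebra ℤ (Fin n → ℤ) :=
  ∑ σ : Equiv.Perm (Fin n), ∑ ε : Fin n → Bool,
    if (∏ i, (if ε i then (-1 : ℤ) else 1)) = 1 then wDet σ ε • xpow (wAct σ ε β) else 0

end


theorem tr_sum_swap_zero {M : Type*} [AddCommGroup M] (h2 : ∀ x : M, x = -x → x = 0) {m : ℕ}
    (S : Finset (Fin m → ℕ)) (G : (Fin m → ℕ) → M) (i j : Fin m)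
    (hG : ∀ d, G (d ∘ Equiv.swap i j) = - G d)
    (hS : ∀ d ∈ S, d ∘ Equiv.swap i j ∈ S) : ∑ d ∈ S, G d = 0 := by
  apply h2
  rw [← Finset.sum_neg_distrib]
  refine Finset.sum_nbij' (fun d => d ∘ Equiv.swap i j) (fun d => d ∘ Equiv.swap i j) hS hS ?_ ?_ ?_
  · intro d _; funext x; simp
  · intro d _; funext x; simp
  · intro d _; rw [hG]; simp

theorem tr_lemmaA {M : Type*} [AddCommGroup M] (h2 : ∀ x : M, x = -x → x = 0) {m : ℕ}
    (G : (Fin m → ℕ) → M) (hG : ∀ i j d, i ≠ j → G (d ∘ Equiv.swap i j) = - G d)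
    (a : Fin m → ℕ) (ha : StrictMono a) :
    ∑ d ∈ Fintype.piFinset (fun i => Finset.range (a i + 1)), G d =
      ∑ d ∈ (Fintype.piFinset (fun i => Finset.range (a i + 1))).filter
        (fun d => ∀ i : Fin m, ∀ h : (i : ℕ) + 1 < m, a i < d ⟨(i : ℕ) + 1, h⟩), G d := by
  classical
  have step : ∀ j : ℕ,
      ∑ d ∈ (Fintype.piFinset (fun i => Finset.range (a i + 1))).filter
        (fun d => ∀ i : Fin m, ∀ h : (i : ℕ) + 1 < m, j ≤ (i : ℕ) → a i < d ⟨(i : ℕ) + 1, h⟩), G d =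
      ∑ d ∈ (Fintype.piFinset (fun i => Finset.range (a i + 1))).filter
        (fun d => ∀ i : Fin m, ∀ h : (i : ℕ) + 1 < m, j + 1 ≤ (i : ℕ) → a i < d ⟨(i : ℕ) + 1, h⟩),
          G d := by
    intro j
    by_cases hj : j + 1 < m
    · have key := tr_sum_swap_zero h2
        ((Fintype.piFinset (fun i => Finset.range (a i + 1))).filter
        (fun d => (∀ i : Fin m, ∀ h : (i : ℕ) + 1 < m, j + 1 ≤ (i : ℕ) → a i < d ⟨(i : ℕ) + 1, h⟩)
          ∧ d ⟨j + 1, hj⟩ ≤ a ⟨j, by omega⟩)) G ⟨j, by omega⟩ ⟨j + 1, hj⟩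
          (fun d => hG _ _ d (by simp)) (by
          intro d hd
          simp only [Finset.mem_filter, Fintype.mem_piFinset, Finset.mem_range] at hd ⊢
          obtain ⟨h1, h3, h4⟩ := hd
          have hlt : a ⟨j, by omega⟩ < a ⟨j + 1, hj⟩ := ha (by simp)
          refine ⟨?_, ?_, ?_⟩
          · intro i
            by_cases e1 : i = ⟨j, by omega⟩
            · subst e1; simp; omega
            by_cases e2 : i = ⟨j + 1, hj⟩
            · subst e2; simp; have := h1 ⟨j, by omega⟩; omega
            · simp [Equiv.swap_apply_of_ne_of_ne e1 e2]
              have := h1 i; omega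
          · intro i h hji
            have e1 : (⟨(i : ℕ) + 1, h⟩ : Fin m) ≠ ⟨j, by omega⟩ := by
              simp; omega
            have e2 : (⟨(i : ℕ) + 1, h⟩ : Fin m) ≠ ⟨j + 1, hj⟩ := by
              simp; omega
            simp [Equiv.swap_apply_of_ne_of_ne e1 e2]
            exact h3 i h hji
          · simp
            have := h1 ⟨j, by omega⟩
            omega)
      rw [← Finset.sum_filter_add_sum_filter_not (s := (Fintype.piFinset (fun i => Finset.range (a i + 1))).filter
        (fun d => ∀ i : Fin m, ∀ h : (i : ℕ) + 1 < m, j + 1 ≤ (i : ℕ) → a i < d ⟨(i : ℕ) + 1, h⟩))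
        (fun d => d ⟨j + 1, hj⟩ ≤ a ⟨j, by omega⟩), Finset.filter_filter, Finset.filter_filter, key,
        zero_add]
      refine Finset.sum_congr (Finset.filter_congr ?_) (fun _ _ => rfl)
      intro d _
      constructor
      · intro h
        refine ⟨fun i hi hji => h i hi (by omega), ?_⟩
        have := h ⟨j, by omega⟩ hj le_rfl
        simpa using this
      · rintro ⟨h, h'⟩ i hi hji
        rcases Nat.lt_or_ge j i with h5 | h5
        · exact h i hi h5
        · obtain rfl : j = (i : ℕ) := by omega
          simpa using h'
    · refine Finset.sum_congr (Finset.filter_congr ?_) (fun _ _ => rfl)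
      intro d _
      constructor
      · intro h i hi hji; exact h i hi (by omega)
      · intro h i hi hji; omega
  have all : ∀ j : ℕ,
      ∑ d ∈ (Fintype.piFinset (fun i => Finset.range (a i + 1))).filter
        (fun d => ∀ i : Fin m, ∀ h : (i : ℕ) + 1 < m, 0 ≤ (i : ℕ) → a i < d ⟨(i : ℕ) + 1, h⟩), G d =
      ∑ d ∈ (Fintype.piFinset (fun i => Finset.range (a i + 1))).filter
        (fun d => ∀ i : Fin m, ∀ h : (i : ℕ) + 1 < m, j ≤ (i : ℕ) → a i < d ⟨(i : ℕ) + 1, h⟩),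
          G d := by
    intro j
    induction j with
    | zero => rfl
    | succ j ih => rw [ih, step]
  have := all m
  have e : (Fintype.piFinset (fun i => Finset.range (a i + 1))).filter
        (fun d => ∀ i : Fin m, ∀ h : (i : ℕ) + 1 < m, m ≤ (i : ℕ) → a i < d ⟨(i : ℕ) + 1, h⟩) =
      Fintype.piFinset (fun i => Finset.range (a i + 1)) := by
    apply Finset.filter_true_of_mem
    intro d _ i h hi
    omega
  rw [e] at this
  rw [← this]
  refine Finset.sum_congr (Finset.filter_congr ?_) (fun _ _ => rfl)
  intro d _
  simp

theorem tr_lemmaB {M : Type*} [AddCommGroup M] (h2 : ∀ x : M, x = -x → x = 0) {m : ℕ} (N : ℕ)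
    (G : (Fin m → ℕ) → M) (hG : ∀ i j d, i ≠ j → G (d ∘ Equiv.swap i j) = - G d)
    (a : Fin m → ℕ) (ha : StrictMono a) :
    ∑ d ∈ Fintype.piFinset (fun i => Finset.Ico (a i) N), G d =
      ∑ d ∈ (Fintype.piFinset (fun i => Finset.Ico (a i) N)).filter
        (fun d => ∀ i : Fin m, ∀ h : (i : ℕ) + 1 < m, d i < a ⟨(i : ℕ) + 1, h⟩), G d := by
  classical
  have step : ∀ j : ℕ,
      ∑ d ∈ (Fintype.piFinset (fun i => Finset.Ico (a i) N)).filter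
        (fun d => ∀ i : Fin m, ∀ h : (i : ℕ) + 1 < m, (i : ℕ) < j → d i < a ⟨(i : ℕ) + 1, h⟩), G d =
      ∑ d ∈ (Fintype.piFinset (fun i => Finset.Ico (a i) N)).filter
        (fun d => ∀ i : Fin m, ∀ h : (i : ℕ) + 1 < m, (i : ℕ) < j + 1 → d i < a ⟨(i : ℕ) + 1, h⟩),
          G d := by
    intro j
    by_cases hj : j + 1 < m
    · have key := tr_sum_swap_zero h2
        ((Fintype.piFinset (fun i => Finset.Ico (a i) N)).filter
        (fun d => (∀ i : Fin m, ∀ h : (i : ℕ) + 1 < m, (i : ℕ) < j → d i < a ⟨(i : ℕ) + 1, h⟩)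
          ∧ a ⟨j + 1, hj⟩ ≤ d ⟨j, by omega⟩)) G ⟨j, by omega⟩ ⟨j + 1, hj⟩
          (fun d => hG _ _ d (by simp)) (by
          intro d hd
          simp only [Finset.mem_filter, Fintype.mem_piFinset, Finset.mem_Ico] at hd ⊢
          obtain ⟨h1, h3, h4⟩ := hd
          have hlt : a ⟨j, by omega⟩ < a ⟨j + 1, hj⟩ := ha (by simp)
          refine ⟨?_, ?_, ?_⟩
          · intro i
            by_cases e1 : i = ⟨j, by omega⟩
            · subst e1; simp; have := h1 ⟨j + 1, by omega⟩; omega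
            by_cases e2 : i = ⟨j + 1, hj⟩
            · subst e2; simp; have := h1 ⟨j, by omega⟩; omega
            · simp [Equiv.swap_apply_of_ne_of_ne e1 e2]
              have := h1 i; omega
          · intro i h hji
            have e1 : i ≠ ⟨j, by omega⟩ := by
              intro h; rw [h] at hji; simp at hji
            have e2 : i ≠ ⟨j + 1, hj⟩ := by
              intro h; rw [h] at hji; simp at hji
            simp [Equiv.swap_apply_of_ne_of_ne e1 e2]
            exact h3 i h hji
          · simp
            have := h1 ⟨j + 1, by omega⟩
            omega)
      rw [← Finset.sum_filter_add_sum_filter_not (s := (Fintype.piFinset (fun i => Finset.Ico (a i) N)).filter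
        (fun d => ∀ i : Fin m, ∀ h : (i : ℕ) + 1 < m, (i : ℕ) < j → d i < a ⟨(i : ℕ) + 1, h⟩))
        (fun d => a ⟨j + 1, hj⟩ ≤ d ⟨j, by omega⟩), Finset.filter_filter, Finset.filter_filter, key,
        zero_add]
      refine Finset.sum_congr (Finset.filter_congr ?_) (fun _ _ => rfl)
      intro d _
      constructor
      · rintro ⟨h, h'⟩ i hi hji
        rcases Nat.lt_or_ge i j with h5 | h5
        · exact h i hi h5
        · obtain rfl : j = (i : ℕ) := by omega
          simpa using h'
      · intro h
        refine ⟨fun i hi hji => h i hi (by omega), ?_⟩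
        have := h ⟨j, by omega⟩ hj (by simp)
        simpa using this
    · refine Finset.sum_congr (Finset.filter_congr ?_) (fun _ _ => rfl)
      intro d _
      constructor
      · intro h i hi hji; exact h i hi (by omega)
      · intro h i hi hji; exact h i hi (by omega)
  have all : ∀ j : ℕ,
      ∑ d ∈ Fintype.piFinset (fun i => Finset.Ico (a i) N), G d =
      ∑ d ∈ (Fintype.piFinset (fun i => Finset.Ico (a i) N)).filter
        (fun d => ∀ i : Fin m, ∀ h : (i : ℕ) + 1 < m, (i : ℕ) < j → d i < a ⟨(i : ℕ) + 1, h⟩),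
          G d := by
    intro j
    induction j with
    | zero => rw [Finset.filter_true_of_mem]; intro d _ i h hi; omega
    | succ j ih => rw [ih, step]
  rw [all m]
  refine Finset.sum_congr (Finset.filter_congr ?_) (fun _ _ => rfl)
  intro d _
  simp

/-- interlacing condition of a triple -/
def TrInter {m : ℕ} (a c d : Fin m → ℕ) : Prop :=
  (∀ i, d i ≤ a i) ∧ (∀ i, d i ≤ c i) ∧
  (∀ i : Fin m, ∀ h : (i : ℕ) + 1 < m, a i < d ⟨(i : ℕ) + 1, h⟩) ∧
  (∀ i : Fin m, ∀ h : (i : ℕ) + 1 < m, c i < d ⟨(i : ℕ) + 1, h⟩)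

open Classical in
theorem tr_pieri {R : Type*} [CommRing R] (h2 : ∀ x : R, x = -x → x = 0) {m : ℕ} (N : ℕ)
    (t : R) (w : ℕ → R)
    (F : (Fin m → ℕ) → R) (hF : ∀ i j d, i ≠ j → F (d ∘ Equiv.swap i j) = - F d)
    (a : Fin m → ℕ) (ha : StrictMono a) (haN : ∀ i, a i < N) :
    ∑ c ∈ Fintype.piFinset (fun _ : Fin m => Finset.range N),
      (∏ i, ∑ d ∈ Finset.range (min (a i) (c i) + 1), w d * t ^ (a i + c i - 2 * d)) * F c =
    ∑ c ∈ Fintype.piFinset (fun _ : Fin m => Finset.range N),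
      ∑ d ∈ (Fintype.piFinset (fun _ : Fin m => Finset.range N)).filter (fun d => TrInter a c d),
        ((∏ i, w (d i)) * t ^ (∑ i, (a i + c i - 2 * d i))) * F c := by
  have hsum : ∀ (i j : Fin m) (d : Fin m → ℕ), ∑ x, (d ∘ Equiv.swap i j) x = ∑ x, d x :=
    fun i j d => Equiv.sum_comp (Equiv.swap i j) d
  -- the inner function
  let E : (Fin m → ℕ) → (Fin m → ℕ) → R := fun d c =>
    (∏ i, w (d i)) * t ^ (∑ i, a i + ∑ i, c i - 2 * ∑ i, d i) * F c
  have hE : ∀ d c : Fin m → ℕ, (∀ i, d i ≤ a i) → (∀ i, d i ≤ c i) →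
      (∏ i, w (d i)) * t ^ (∑ i, (a i + c i - 2 * d i)) * F c = E d c := by
    intro d c h1 h3
    simp only [E]
    congr 3
    rw [Finset.sum_tsub_distrib _ (fun i _ => by have := h1 i; have := h3 i; omega),
      Finset.sum_add_distrib, Finset.mul_sum]
  let G : (Fin m → ℕ) → R := fun d => ∑ c ∈ Fintype.piFinset (fun i => Finset.Ico (d i) N), E d c
  have hG : ∀ i j d, i ≠ j → G (d ∘ Equiv.swap i j) = - G d := by
    intro i j d hij
    simp only [G]
    rw [← Finset.sum_neg_distrib]
    refine Finset.sum_nbij' (fun d => d ∘ Equiv.swap i j) (fun d => d ∘ Equiv.swap i j) ?_ ?_ ?_ ?_ ?_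
    · intro c hc
      simp only [Fintype.mem_piFinset, Function.comp_apply] at hc ⊢
      intro x; have := hc (Equiv.swap i j x); simpa using this
    · intro c hc
      simp only [Fintype.mem_piFinset, Function.comp_apply] at hc ⊢
      intro x; exact hc (Equiv.swap i j x)
    · intro d _; funext x; simp
    · intro d _; funext x; simp
    · intro c _
      simp only [E]
      rw [hF _ _ _ hij, hsum, hsum]
      have : ∏ x, w ((d ∘ Equiv.swap i j) x) = ∏ x, w (d x) :=
        Equiv.prod_comp (Equiv.swap i j) (fun x => w (d x))
      rw [this]; ring
  have hEF : ∀ d, ∀ i j c, i ≠ j → E d (c ∘ Equiv.swap i j) = - E d c := by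
    intro d i j c hij
    simp only [E]
    rw [hF _ _ _ hij, hsum]; ring
  -- left side
  have hL : ∑ c ∈ Fintype.piFinset (fun _ : Fin m => Finset.range N),
      (∏ i, ∑ d ∈ Finset.range (min (a i) (c i) + 1), w d * t ^ (a i + c i - 2 * d)) * F c =
      ∑ d ∈ Fintype.piFinset (fun i => Finset.range (a i + 1)), G d := by
    simp only [G]
    rw [Finset.sum_comm' (t' := Fintype.piFinset (fun _ : Fin m => Finset.range N))
      (s' := fun c => Fintype.piFinset (fun i => Finset.range (min (a i) (c i) + 1)))]
    · refine Finset.sum_congr rfl (fun c _ => ?_)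
      rw [Finset.prod_univ_sum, Finset.sum_mul]
      refine Finset.sum_congr rfl (fun d hd => ?_)
      simp only [Fintype.mem_piFinset, Finset.mem_range] at hd
      rw [← hE d c (fun i => by have := hd i; omega) (fun i => by have := hd i; omega),
        Finset.prod_mul_distrib, Finset.prod_pow_eq_pow_sum]
    · intro d c
      simp only [Fintype.mem_piFinset, Finset.mem_range, Finset.mem_Ico]
      constructor
      · rintro ⟨h1, h3⟩
        exact ⟨fun i => by have := h1 i; have := h3 i; omega, fun i => by have := h3 i; omega⟩
      · rintro ⟨h1, h3⟩
        exact ⟨fun i => by have := h1 i; omega, fun i => by have := h1 i; have := h3 i; omega⟩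
  rw [hL, tr_lemmaA h2 G hG a ha]
  symm
  rw [Finset.sum_comm' (t' := Fintype.piFinset (fun _ : Fin m => Finset.range N)) (s' := fun d =>
    (Fintype.piFinset (fun _ : Fin m => Finset.range N)).filter (fun c => TrInter a c d))
    (by intro c d; simp only [Finset.mem_filter]; tauto)]
  rw [← Finset.sum_subset (s₁ := (Fintype.piFinset (fun i => Finset.range (a i + 1))).filter
        (fun d => ∀ i : Fin m, ∀ h : (i : ℕ) + 1 < m, a i < d ⟨(i : ℕ) + 1, h⟩))]
  · symm
    refine Finset.sum_congr rfl (fun d hd => ?_)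
    simp only [Finset.mem_filter, Fintype.mem_piFinset, Finset.mem_range] at hd
    obtain ⟨hd1, hd2⟩ := hd
    have hdm : StrictMono d := by
      cases m with
      | zero => intro i; exact i.elim0
      | succ m =>
        rw [Fin.strictMono_iff_lt_succ]
        intro i
        have e1 := hd1 i.castSucc
        have e2 := hd2 i.castSucc (by simp)
        have e3 : (⟨(i.castSucc : ℕ) + 1, by simp⟩ : Fin (m+1)) = i.succ := by ext; simp
        rw [e3] at e2
        omega
    simp only [G]
    rw [tr_lemmaB h2 N (E d) (hEF d) d hdm]
    refine Finset.sum_congr ?_ ?_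
    · ext c
      rw [Finset.mem_filter, Finset.mem_filter]
      simp only [Fintype.mem_piFinset, Finset.mem_range, Finset.mem_Ico, TrInter]
      constructor
      · rintro ⟨h1, h3⟩
        exact ⟨fun i => (h1 i).2, fun i => by have := hd1 i; omega, fun i => (h1 i).1, hd2, h3⟩
      · rintro ⟨h1, h3, h4, h5, h6⟩
        exact ⟨fun i => ⟨h4 i, h1 i⟩, h6⟩
    · intro c hc
      have hc := (Finset.mem_filter.mp hc)
      rw [hE d c hc.2.1 hc.2.2.1]
  · intro d hd
    simp only [Finset.mem_filter, Fintype.mem_piFinset, Finset.mem_range] at hd ⊢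
    intro i
    have := hd.1 i; have := haN i; omega
  · intro d hd hd'
    apply Finset.sum_eq_zero
    intro c hc
    exfalso
    apply hd'
    have hc := (Finset.mem_filter.mp hc)
    simp only [Finset.mem_filter, Fintype.mem_piFinset, Finset.mem_range]
    exact ⟨fun i => by have := hc.2.1 i; omega, hc.2.2.2.1⟩
open scoped BigOperators

noncomputable section

/-- the partition function of a family of vectors -/
def trPq {ι : Type*} [Fintype ι] {n : ℕ} (v : ι → Fin n → ℚ) (β : Fin n → ℚ) : PowerSeries ℤ :=
  PowerSeries.mk fun k =>
    (Nat.card {m : ι → ℕ // (∑ α, m α) = k ∧ (∑ α, (m α : ℚ) • v α) = β} : ℤ)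

end

theorem trPq_equiv {ι κ : Type*} [Fintype ι] [Fintype κ] {n : ℕ} (e : ι ≃ κ) (v : κ → Fin n → ℚ)
    (β : Fin n → ℚ) : trPq (v ∘ e) β = trPq v β := by
  unfold trPq
  congr 1
  funext k
  congr 1
  refine Nat.card_congr ((Equiv.arrowCongr e (Equiv.refl ℕ)).subtypeEquiv ?_)
  intro a
  have h1 : ∑ α, (Equiv.arrowCongr e (Equiv.refl ℕ)) a α = ∑ α, a α := by
    rw [← Equiv.sum_comp e]; simp [Equiv.arrowCongr]
  have h2 : ∑ α, (((Equiv.arrowCongr e (Equiv.refl ℕ)) a α : ℕ) : ℚ) • v α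
      = ∑ α, (a α : ℚ) • (v ∘ e) α := by
    rw [← Equiv.sum_comp e]; simp [Equiv.arrowCongr]
  rw [h1, h2]

theorem trPq_finite {ι : Type*} [Fintype ι] (k : ℕ) (P : (ι → ℕ) → Prop) :
    Finite {m : ι → ℕ // (∑ α, m α) = k ∧ P m} := by
  classical
  refine Set.Finite.to_subtype (s := {m : ι → ℕ | (∑ α, m α) = k ∧ P m}) ?_
  refine Set.Finite.subset (Finset.finite_toSet (Finset.piAntidiag Finset.univ k)) ?_
  intro m hm
  rw [Finset.mem_coe, Finset.mem_piAntidiag]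
  exact ⟨hm.1, by simp⟩

theorem trPq_neg {ι κ : Type*} [Fintype ι] [Fintype κ] {m : ℕ} (u : ι → Fin m → ℚ)
    (x : κ → Fin m → ℚ) (v : ι ⊕ κ → Fin (m + 1) → ℚ)
    (hu : ∀ i, v (Sum.inl i) = Fin.snoc (u i) (0 : ℚ))
    (hx : ∀ i, v (Sum.inr i) = Fin.snoc (x i) (1 : ℚ)) (β : Fin (m + 1) → ℚ)
    (hβ : β (Fin.last m) < 0) : trPq v β = 0 := by
  ext k
  simp only [trPq, PowerSeries.coeff_mk, map_zero, Nat.cast_eq_zero]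
  rw [Nat.card_eq_zero]
  left
  constructor
  rintro ⟨f, h1, h2⟩
  rw [← h2] at hβ
  simp only [Fintype.sum_sum_type, Pi.add_apply, Finset.sum_apply, Pi.smul_apply, hu, hx,
    Fin.snoc_last, smul_eq_mul, mul_zero, mul_one, Finset.sum_const_zero, zero_add] at hβ
  have : (0 : ℚ) ≤ ∑ i, (f (Sum.inr i) : ℚ) := Finset.sum_nonneg (fun i _ => Nat.cast_nonneg _)
  linarith

theorem trPq_sum {ι κ : Type*} [Fintype ι] [Fintype κ] [DecidableEq κ] {m : ℕ} (u : ι → Fin m → ℚ)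
    (x : κ → Fin m → ℚ) (v : ι ⊕ κ → Fin (m + 1) → ℚ)
    (hu : ∀ i, v (Sum.inl i) = Fin.snoc (u i) (0 : ℚ))
    (hx : ∀ i, v (Sum.inr i) = Fin.snoc (x i) (1 : ℚ)) (β : Fin (m + 1) → ℚ) (l : ℕ)
    (hβ : β (Fin.last m) = l) :
    trPq v β = PowerSeries.X ^ l * ∑ τ ∈ Finset.piAntidiag (Finset.univ : Finset κ) l,
      trPq u ((fun i => β i.castSucc) - ∑ j, (τ j : ℚ) • x j) := by
  -- characterization
  have hchar : ∀ f : ι ⊕ κ → ℕ, (∑ α, (f α : ℚ) • v α) = β ↔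
      (∑ j, f (Sum.inr j) = l ∧ ∑ i, (f (Sum.inl i) : ℚ) • u i =
        (fun i => β i.castSucc) - ∑ j, (f (Sum.inr j) : ℚ) • x j) := by
    intro f
    constructor
    · intro h
      constructor
      · have := congrFun h (Fin.last m)
        rw [hβ] at this
        simp only [Fintype.sum_sum_type, Pi.add_apply, Finset.sum_apply, Pi.smul_apply, hu, hx,
          Fin.snoc_last, smul_eq_mul, mul_zero, mul_one, Finset.sum_const_zero, zero_add] at this
        exact_mod_cast this
      · funext i
        have := congrFun h i.castSucc
        simp only [Fintype.sum_sum_type, Pi.add_apply, Finset.sum_apply, Pi.smul_apply, hu, hx,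
          Fin.snoc_castSucc, smul_eq_mul] at this
        simp only [Pi.sub_apply, Finset.sum_apply, Pi.smul_apply, smul_eq_mul]
        linarith
    · rintro ⟨h1, h2⟩
      funext i
      refine Fin.lastCases ?_ ?_ i
      · rw [hβ]
        simp only [Fintype.sum_sum_type, Pi.add_apply, Finset.sum_apply, Pi.smul_apply, hu, hx,
          Fin.snoc_last, smul_eq_mul, mul_zero, mul_one, Finset.sum_const_zero, zero_add]
        exact_mod_cast h1
      · intro i
        have := congrFun h2 i
        simp only [Pi.sub_apply, Finset.sum_apply, Pi.smul_apply, smul_eq_mul] at this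
        simp only [Fintype.sum_sum_type, Pi.add_apply, Finset.sum_apply, Pi.smul_apply, hu, hx,
          Fin.snoc_castSucc, smul_eq_mul]
        linarith
  ext k
  rw [PowerSeries.coeff_X_pow_mul']
  simp only [trPq, PowerSeries.coeff_mk, map_sum]
  split_ifs with hk
  · rw [← Nat.cast_sum]
    congr 1
    have hfin : ∀ a : {a // a ∈ Finset.piAntidiag (Finset.univ : Finset κ) l},
        Finite {f : ι → ℕ // ∑ α, f α = k - l ∧ ∑ α, (f α : ℚ) • u α =
          (fun i => β i.castSucc) - ∑ j, (a.1 j : ℚ) • x j} := fun a => trPq_finite _ _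
    rw [← Finset.sum_coe_sort, ← Nat.card_sigma]
    · refine Nat.card_congr ?_
      refine
        { toFun := fun f => ⟨⟨fun j => f.1 (Sum.inr j), ?_⟩, ⟨fun i => f.1 (Sum.inl i), ?_, ?_⟩⟩
          invFun := fun p => ⟨Sum.elim p.2.1 p.1.1, ?_, ?_⟩
          left_inv := ?_
          right_inv := ?_ }
      · have := (hchar f.1).1 f.2.2
        simp [Finset.mem_piAntidiag, this.1]
      · have := (hchar f.1).1 f.2.2
        have h3 := f.2.1
        rw [Fintype.sum_sum_type] at h3
        have h5 := this.1
        change ∑ i, f.1 (Sum.inl i) = k - l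
        omega
      · exact ((hchar f.1).1 f.2.2).2
      · have h3 := p.2.2.1
        have h4 := p.1.2
        rw [Finset.mem_piAntidiag] at h4
        simp only [Fintype.sum_sum_type, Sum.elim_inl, Sum.elim_inr]
        have h5 : ∑ j, p.1.1 j = l := h4.1
        omega
      · rw [hchar]
        have h4 := p.1.2
        rw [Finset.mem_piAntidiag] at h4
        exact ⟨h4.1, p.2.2.2⟩
      · rintro ⟨f, hf⟩
        apply Subtype.ext
        funext a
        cases a <;> rfl
      · rintro ⟨⟨τ, h⟩, ⟨f, hf⟩⟩
        rfl
  · rw [Nat.cast_eq_zero, Nat.card_eq_zero]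
    left
    constructor
    rintro ⟨f, h1, h2⟩
    have := ((hchar f).1 h2).1
    rw [Fintype.sum_sum_type] at h1
    omega

/-- the extra roots -/
def trX (m : ℕ) : Option (Fin m × Bool) → Fin m → ℚ
  | none => 0
  | some (j, b) => Pi.single j (if b then 1 else -1)

theorem tr_mem_rootsB {n : ℕ} (α : Fin n → ℚ) : α ∈ rootsB n ↔
    (∃ i j : Fin n, j < i ∧ α = Pi.single i 1 - Pi.single j 1) ∨
    (∃ i j : Fin n, j < i ∧ α = Pi.single i 1 + Pi.single j 1) ∨
    (∃ i : Fin n, α = Pi.single i 1) := by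
  simp only [rootsB, rootsD, Finset.mem_union, Finset.mem_image, Finset.mem_filter, Finset.mem_univ,
    true_and, Prod.exists, or_assoc]
  constructor
  · rintro (⟨i, j, h, rfl⟩ | ⟨i, j, h, rfl⟩ | ⟨i, rfl⟩)
    · exact Or.inl ⟨i, j, h, rfl⟩
    · exact Or.inr (Or.inl ⟨i, j, h, rfl⟩)
    · exact Or.inr (Or.inr ⟨i, rfl⟩)
  · rintro (⟨i, j, h, rfl⟩ | ⟨i, j, h, rfl⟩ | ⟨i, rfl⟩)
    · exact Or.inl ⟨i, j, h, rfl⟩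
    · exact Or.inr (Or.inl ⟨i, j, h, rfl⟩)
    · exact Or.inr (Or.inr ⟨i, rfl⟩)

theorem tr_single_castSucc {m : ℕ} (i : Fin m) (c : ℚ) :
    (Pi.single i.castSucc c : Fin (m + 1) → ℚ) = Fin.snoc (Pi.single i c) (0 : ℚ) := by
  funext k
  refine Fin.lastCases ?_ ?_ k
  · have : Fin.last m ≠ i.castSucc := (Fin.castSucc_lt_last i).ne'
    simp [Pi.single_apply, this]
  · intro k
    simp [Pi.single_apply]

theorem tr_single_last {m : ℕ} (c : ℚ) :
    (Pi.single (Fin.last m) c : Fin (m + 1) → ℚ) = Fin.snoc (0 : Fin m → ℚ) c := by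
  funext k
  refine Fin.lastCases ?_ ?_ k
  · simp
  · intro k
    have : k.castSucc ≠ Fin.last m := (Fin.castSucc_lt_last k).ne
    simp [Pi.single_apply, this]

theorem tr_snoc_add {m : ℕ} (a b : Fin m → ℚ) (x y : ℚ) :
    (Fin.snoc a x + Fin.snoc b y : Fin (m + 1) → ℚ) = Fin.snoc (a + b) (x + y) := by
  funext k
  refine Fin.lastCases ?_ ?_ k
  · simp
  · intro k
    simp

theorem tr_snoc_sub {m : ℕ} (a b : Fin m → ℚ) (x y : ℚ) :
    (Fin.snoc a x - Fin.snoc b y : Fin (m + 1) → ℚ) = Fin.snoc (a - b) (x - y) := by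
  funext k
  refine Fin.lastCases ?_ ?_ k
  · simp
  · intro k
    simp

theorem tr_snoc_inj {m : ℕ} {a b : Fin m → ℚ} {x y : ℚ}
    (h : (Fin.snoc a x : Fin (m + 1) → ℚ) = Fin.snoc b y) : a = b ∧ x = y := by
  constructor
  · funext k
    have := congrFun h k.castSucc
    simpa using this
  · have := congrFun h (Fin.last m)
    simpa using this

theorem trX_inj (m : ℕ) : Function.Injective (trX m) := by
  rintro (_ | ⟨i, b⟩) (_ | ⟨j, c⟩) h
  · rfl
  · exfalso
    have := congrFun h j
    cases c <;> simp [trX] at this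
  · exfalso
    have := congrFun h i
    cases b <;> simp [trX] at this
  · have hi := congrFun h i
    by_cases hij : i = j
    · subst hij
      cases b <;> cases c <;> simp [trX] at hi ⊢ <;> norm_num at hi
    · exfalso
      cases b <;> simp [trX, hij] at hi

theorem tr_roots_equiv (m : ℕ) : ∃ e : {α // α ∈ rootsB m} ⊕ Option (Fin m × Bool) ≃
    {α // α ∈ rootsB (m + 1)},
    (∀ i, ((e (Sum.inl i)).1 : Fin (m + 1) → ℚ) = Fin.snoc i.1 (0 : ℚ)) ∧
    (∀ i, ((e (Sum.inr i)).1 : Fin (m + 1) → ℚ) = Fin.snoc (trX m i) (1 : ℚ)) := by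
  have h1 : ∀ α ∈ rootsB m, (Fin.snoc α (0 : ℚ) : Fin (m + 1) → ℚ) ∈ rootsB (m + 1) := by
    intro α hα
    rw [tr_mem_rootsB] at hα ⊢
    rcases hα with ⟨i, j, h, rfl⟩ | ⟨i, j, h, rfl⟩ | ⟨i, rfl⟩
    · refine Or.inl ⟨i.castSucc, j.castSucc, by simpa using h, ?_⟩
      simp [tr_single_castSucc, tr_snoc_sub]
    · refine Or.inr (Or.inl ⟨i.castSucc, j.castSucc, by simpa using h, ?_⟩)
      simp [tr_single_castSucc, tr_snoc_add]
    · refine Or.inr (Or.inr ⟨i.castSucc, ?_⟩)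
      simp [tr_single_castSucc]
  have h2 : ∀ i, (Fin.snoc (trX m i) (1 : ℚ) : Fin (m + 1) → ℚ) ∈ rootsB (m + 1) := by
    intro i
    rw [tr_mem_rootsB]
    rcases i with _ | ⟨j, b⟩
    · refine Or.inr (Or.inr ⟨Fin.last m, ?_⟩)
      simp [tr_single_last, trX]
    · cases b
      · refine Or.inl ⟨Fin.last m, j.castSucc, Fin.castSucc_lt_last j, ?_⟩
        simp [tr_single_last, tr_single_castSucc, tr_snoc_sub, trX, Pi.single_neg]
      · refine Or.inr (Or.inl ⟨Fin.last m, j.castSucc, Fin.castSucc_lt_last j, ?_⟩)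
        simp [tr_single_last, tr_single_castSucc, tr_snoc_add, trX]
  let f : {α // α ∈ rootsB m} ⊕ Option (Fin m × Bool) → {α // α ∈ rootsB (m + 1)} :=
    Sum.elim (fun α => ⟨Fin.snoc α.1 (0 : ℚ), h1 α.1 α.2⟩)
      (fun i => ⟨Fin.snoc (trX m i) (1 : ℚ), h2 i⟩)
  have hf : Function.Bijective f := by
    constructor
    · rintro (a | a) (b | b) h
      · have := congrArg Subtype.val h
        have := (tr_snoc_inj this).1
        rw [Subtype.ext this]
      · have := congrArg Subtype.val h
        have := (tr_snoc_inj this).2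
        norm_num at this
      · have := congrArg Subtype.val h
        have := (tr_snoc_inj this).2
        norm_num at this
      · have := congrArg Subtype.val h
        have := (tr_snoc_inj this).1
        rw [trX_inj m this]
    · rintro ⟨α, hα⟩
      have hα' := hα
      rw [tr_mem_rootsB] at hα'
      rcases hα' with ⟨i, j, h, he⟩ | ⟨i, j, h, he⟩ | ⟨i, he⟩
      · have hj : j = (j.castPred (ne_of_lt (lt_of_lt_of_le h (Fin.le_last i)))).castSucc := by simp
        generalize (j.castPred (ne_of_lt (lt_of_lt_of_le h (Fin.le_last i)))) = j' at hj
        subst hj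
        induction i using Fin.lastCases with
        | last =>
          refine ⟨Sum.inr (some (j', false)), Subtype.ext ?_⟩
          change _ = α
          rw [he]
          simp [f, tr_single_last, tr_single_castSucc, tr_snoc_sub, trX, Pi.single_neg]
        | cast i =>
          refine ⟨Sum.inl ⟨Pi.single i 1 - Pi.single j' 1, ?_⟩, Subtype.ext ?_⟩
          · rw [tr_mem_rootsB]
            exact Or.inl ⟨i, j', by simpa using h, rfl⟩
          · change _ = α
            rw [he]
            simp [f, tr_single_castSucc, tr_snoc_sub]
      · have hj : j = (j.castPred (ne_of_lt (lt_of_lt_of_le h (Fin.le_last i)))).castSucc := by simp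
        generalize (j.castPred (ne_of_lt (lt_of_lt_of_le h (Fin.le_last i)))) = j' at hj
        subst hj
        induction i using Fin.lastCases with
        | last =>
          refine ⟨Sum.inr (some (j', true)), Subtype.ext ?_⟩
          change _ = α
          rw [he]
          simp [f, tr_single_last, tr_single_castSucc, tr_snoc_add, trX]
        | cast i =>
          refine ⟨Sum.inl ⟨Pi.single i 1 + Pi.single j' 1, ?_⟩, Subtype.ext ?_⟩
          · rw [tr_mem_rootsB]
            exact Or.inr (Or.inl ⟨i, j', by simpa using h, rfl⟩)
          · change _ = α
            rw [he]
            simp [f, tr_single_castSucc, tr_snoc_add]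
      · induction i using Fin.lastCases with
        | last =>
          refine ⟨Sum.inr none, Subtype.ext ?_⟩
          change _ = α
          rw [he]
          simp [f, tr_single_last, trX]
        | cast i =>
          refine ⟨Sum.inl ⟨Pi.single i 1, ?_⟩, Subtype.ext ?_⟩
          · rw [tr_mem_rootsB]
            exact Or.inr (Or.inr ⟨i, rfl⟩)
          · change _ = α
            rw [he]
            simp [f, tr_single_castSucc]
  exact ⟨Equiv.ofBijective f hf, fun i => rfl, fun i => rfl⟩

theorem tr_kostant_neg {m : ℕ} (β : Fin (m + 1) → ℚ) (hβ : β (Fin.last m) < 0) :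
    kostantQ (rootsB (m + 1)) β = 0 := by
  obtain ⟨e, h1, h2⟩ := tr_roots_equiv m
  have : kostantQ (rootsB (m + 1)) β =
    trPq (fun α : {α // α ∈ rootsB (m + 1)} => (α : Fin (m + 1) → ℚ)) β := rfl
  rw [this, ← trPq_equiv e]
  exact trPq_neg (fun α => α.1) (trX m) _ h1 h2 β hβ

theorem tr_kostant_eq {n : ℕ} (R : Finset (Fin n → ℚ)) (β : Fin n → ℚ) :
    kostantQ R β = trPq (fun α : {α // α ∈ R} => (α : Fin n → ℚ)) β := rfl

theorem tr_kostant_rec {m : ℕ} (β : Fin (m + 1) → ℚ) (l : ℕ) (hβ : β (Fin.last m) = l) :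
    kostantQ (rootsB (m + 1)) β = PowerSeries.X ^ l *
      ∑ τ ∈ Finset.piAntidiag (Finset.univ : Finset (Option (Fin m × Bool))) l,
      kostantQ (rootsB m) ((fun i => β i.castSucc) - ∑ j, (τ j : ℚ) • trX m j) := by
  obtain ⟨e, h1, h2⟩ := tr_roots_equiv m
  simp only [tr_kostant_eq]
  rw [← trPq_equiv e]
  exact trPq_sum (fun α : {α // α ∈ rootsB m} => (α : Fin m → ℚ)) (trX m) _ h1 h2 β l hβ
open scoped BigOperators

/-- extension of a permutation fixing the last point -/
def trExt {m : ℕ} (σ : Equiv.Perm (Fin m)) : Equiv.Perm (Fin (m + 1)) :=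
  (Equiv.permCongr finSuccEquivLast.symm) σ.optionCongr

theorem trExt_castSucc {m : ℕ} (σ : Equiv.Perm (Fin m)) (i : Fin m) :
    trExt σ i.castSucc = (σ i).castSucc := by
  simp [trExt, Equiv.permCongr_apply]

theorem trExt_last {m : ℕ} (σ : Equiv.Perm (Fin m)) :
    trExt σ (Fin.last m) = Fin.last m := by
  simp [trExt, Equiv.permCongr_apply]

theorem trExt_inv_castSucc {m : ℕ} (σ : Equiv.Perm (Fin m)) (i : Fin m) :
    (trExt σ)⁻¹ i.castSucc = (σ⁻¹ i).castSucc := by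
  rw [Equiv.Perm.inv_eq_iff_eq, trExt_castSucc]; simp

theorem trExt_inv_last {m : ℕ} (σ : Equiv.Perm (Fin m)) :
    (trExt σ)⁻¹ (Fin.last m) = Fin.last m := by
  rw [Equiv.Perm.inv_eq_iff_eq, trExt_last]

theorem trExt_sign {m : ℕ} (σ : Equiv.Perm (Fin m)) :
    Equiv.Perm.sign (trExt σ) = Equiv.Perm.sign σ := by
  unfold trExt
  rw [Equiv.Perm.sign_permCongr, Equiv.optionCongr_sign]

theorem trExt_inj {m : ℕ} : Function.Injective (trExt (m := m)) := by
  intro σ τ h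
  ext i
  have := congrArg (fun f => f i.castSucc) h
  simp only [trExt_castSucc] at this
  simpa using congrArg Fin.val this

theorem trExt_surj {m : ℕ} (σ : Equiv.Perm (Fin (m + 1))) (h : σ (Fin.last m) = Fin.last m) :
    ∃ τ, trExt τ = σ := by
  refine ⟨Equiv.removeNone ((Equiv.permCongr finSuccEquivLast) σ), ?_⟩
  unfold trExt
  have h0 : ((Equiv.permCongr finSuccEquivLast) σ) none = none := by
    simp [Equiv.permCongr_apply, h]
  have := map_equiv_removeNone ((Equiv.permCongr finSuccEquivLast) σ)
  rw [h0, Equiv.swap_self] at this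
  rw [this]
  ext i
  simp [Equiv.permCongr_apply]

noncomputable section

/-- alternating sum over the Weyl group -/
def trAlt {m : ℕ} (Φ : (Fin m → ℚ) → PowerSeries ℤ) (x : Fin m → ℚ) : PowerSeries ℤ :=
  ∑ σ : Equiv.Perm (Fin m), ∑ ε : Fin m → Bool, wDet σ ε • Φ (wAct σ ε x)

end

theorem trAlt_perm {m : ℕ} (Φ : (Fin m → ℚ) → PowerSeries ℤ) (x : Fin m → ℚ)
    (π : Equiv.Perm (Fin m)) :
    trAlt Φ (x ∘ π) = (Equiv.Perm.sign π : ℤ) • trAlt Φ x := by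
  unfold trAlt
  rw [Finset.smul_sum, ← Equiv.sum_comp (Equiv.mulRight π)]
  refine Finset.sum_congr rfl (fun σ _ => ?_)
  rw [Finset.smul_sum]
  refine Finset.sum_congr rfl (fun ε _ => ?_)
  rw [smul_smul]
  congr 1
  · simp [wDet]; ring
  · congr 1
    funext i
    simp [wAct]

theorem trAlt_flip {m : ℕ} (Φ : (Fin m → ℚ) → PowerSeries ℤ) (x : Fin m → ℚ)
    (η : Fin m → Bool) :
    trAlt Φ (fun i => (if η i then -1 else 1) * x i) =
      (∏ i, (if η i then (-1 : ℤ) else 1)) • trAlt Φ x := by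
  unfold trAlt
  rw [Finset.smul_sum]
  refine Finset.sum_congr rfl (fun σ _ => ?_)
  rw [Finset.smul_sum]
  let e : (Fin m → Bool) ≃ (Fin m → Bool) := Function.Involutive.toPerm
    (fun ε i => xor (ε i) (η (σ⁻¹ i))) (by intro ε; funext i; simp)
  rw [← Equiv.sum_comp e]
  refine Finset.sum_congr rfl (fun ε _ => ?_)
  rw [smul_smul]
  congr 1
  · have h1 : ∏ i, (if η i then (-1 : ℤ) else 1) = ∏ i, (if η (σ⁻¹ i) then (-1 : ℤ) else 1) :=
      (Equiv.prod_comp σ⁻¹ (fun i => (if η i then (-1 : ℤ) else 1))).symm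
    rw [h1]
    have he : ∀ i, e ε i = xor (ε i) (η (σ⁻¹ i)) := fun _ => rfl
    simp only [wDet, he]
    rw [mul_left_comm, ← Finset.prod_mul_distrib]
    congr 1
    refine Finset.prod_congr rfl (fun i _ => ?_)
    generalize η (σ⁻¹ i) = b
    generalize ε i = c
    cases b <;> cases c <;> simp
  · congr 1
    funext i
    have he : ∀ i, e ε i = xor (ε i) (η (σ⁻¹ i)) := fun _ => rfl
    simp only [wAct, he]
    generalize η (σ⁻¹ i) = b
    generalize ε i = c
    cases b <;> cases c <;> simp

theorem tr_theta {m : ℕ} (τ : Option (Fin m × Bool) → ℕ) (i : Fin m) :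
    (∑ j, (τ j : ℚ) • trX m j) i = (τ (some (i, true)) : ℚ) - τ (some (i, false)) := by
  rw [Fintype.sum_option]
  simp [trX, Fintype.sum_prod_type, Finset.sum_apply, Pi.single_apply]
  simp [Finset.sum_add_distrib, sub_eq_add_neg]

/-- the Weyl group acts on the extra roots -/
theorem tr_move {m : ℕ} (Φ : (Fin m → ℚ) → PowerSeries ℤ) (x : Fin m → ℚ) (l : ℕ)
    (σ : Equiv.Perm (Fin m)) (ε : Fin m → Bool) :
    ∑ τ ∈ Finset.piAntidiag (Finset.univ : Finset (Option (Fin m × Bool))) l,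
      Φ (wAct σ ε x - ∑ j, (τ j : ℚ) • trX m j) =
    ∑ τ ∈ Finset.piAntidiag (Finset.univ : Finset (Option (Fin m × Bool))) l,
      Φ (wAct σ ε (x + ∑ j, (τ j : ℚ) • trX m j)) := by
  let g : Fin m × Bool ≃ Fin m × Bool :=
    { toFun := fun p => (σ⁻¹ p.1, xor p.2 (!(ε p.1)))
      invFun := fun p => (σ p.1, xor p.2 (!(ε (σ p.1))))
      left_inv := by rintro ⟨i, b⟩; simp
      right_inv := by rintro ⟨i, b⟩; simp }
  let e : Option (Fin m × Bool) ≃ Option (Fin m × Bool) := g.optionCongr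
  symm
  refine Finset.sum_nbij' (fun τ => τ ∘ e) (fun τ => τ ∘ e.symm) ?_ ?_ ?_ ?_ ?_
  · intro τ hτ
    rw [Finset.mem_piAntidiag] at hτ ⊢
    refine ⟨?_, by simp⟩
    rw [← hτ.1]
    exact Equiv.sum_comp e τ
  · intro τ hτ
    rw [Finset.mem_piAntidiag] at hτ ⊢
    refine ⟨?_, by simp⟩
    rw [← hτ.1]
    exact Equiv.sum_comp e.symm τ
  · intro τ _; funext x; simp
  · intro τ _; funext x; simp
  · intro τ _
    congr 1
    funext i
    simp only [wAct, Pi.add_apply, Pi.sub_apply]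
    rw [tr_theta, tr_theta]
    simp only [e, g, Function.comp_apply, Equiv.optionCongr_apply, Option.map_some, Equiv.coe_fn_mk]
    cases ε i <;> simp <;> ring

theorem tr_KB_expand {m : ℕ} (ν μ : Fin (m + 1) → ℤ) (l : ℕ) (hν0 : ∀ i, 0 ≤ ν i)
    (hμ0 : ∀ i, 0 ≤ μ i)
    (h1 : ∀ i : Fin m, ν i.castSucc ≤ μ (Fin.last m)) (hl : ν (Fin.last m) - μ (Fin.last m) = l) :
    KB (m + 1) (fun i => (ν i : ℚ)) (fun i => (μ i : ℚ)) =
      ∑ p : Equiv.Perm (Fin m) × (Fin m → Bool), wDet p.1 p.2 •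
        (PowerSeries.X ^ l * ∑ τ ∈ Finset.piAntidiag (Finset.univ : Finset (Option (Fin m × Bool))) l,
        kostantQ (rootsB m) (wAct p.1 p.2 ((fun i : Fin m => (ν i.castSucc : ℚ)) + rhoB m)
          - ((fun i : Fin m => (μ i.castSucc : ℚ)) + rhoB m) - ∑ j, (τ j : ℚ) • trX m j)) := by
  have hlQ : (ν (Fin.last m) : ℚ) - μ (Fin.last m) = l := by exact_mod_cast hl
  unfold KB
  rw [← Fintype.sum_prod_type']
  symm
  refine Fintype.sum_of_injective (fun p : Equiv.Perm (Fin m) × (Fin m → Bool) =>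
    (trExt p.1, (Fin.snoc p.2 false : Fin (m + 1) → Bool))) ?_ _ _ ?_ ?_
  · rintro ⟨σ, ε⟩ ⟨σ', ε'⟩ h
    simp only [Prod.mk.injEq] at h
    obtain ⟨ha, hb⟩ := h
    rw [trExt_inj ha]
    congr 1
    funext i
    have := congrFun hb i.castSucc
    simpa using this
  · rintro ⟨σ, ε⟩ hp
    simp only
    rw [tr_kostant_neg, smul_zero]
    by_contra hneg
    apply hp
    push Not at hneg
    simp only [Pi.sub_apply, wAct, Pi.add_apply, rhoB, Fin.val_last] at hneg
    have hμl : (0 : ℚ) ≤ μ (Fin.last m) := by exact_mod_cast hμ0 _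
    have hνl : (0 : ℚ) ≤ ν (σ⁻¹ (Fin.last m)) := by exact_mod_cast hν0 _
    have hεl : ε (Fin.last m) = false := by
      cases hε : ε (Fin.last m) with
      | false => rfl
      | true =>
        exfalso
        have h5 : (0 : ℚ) ≤ ((σ⁻¹ (Fin.last m) : Fin (m + 1)) : ℕ) := Nat.cast_nonneg _
        have h6 : (0 : ℚ) ≤ (m : ℚ) := Nat.cast_nonneg _
        generalize σ⁻¹ (Fin.last m) = i at hneg h5 hνl
        simp only [hε, if_true] at hneg
        linarith
    have hσ : σ⁻¹ (Fin.last m) = Fin.last m := by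
      simp only [hεl] at hneg
      generalize hi : σ⁻¹ (Fin.last m) = i at hneg
      induction i using Fin.lastCases with
      | last => rfl
      | cast i =>
        exfalso
        have h5 : (ν i.castSucc : ℚ) ≤ μ (Fin.last m) := by exact_mod_cast h1 i
        have h6 : ((i : ℕ) : ℚ) + 1 ≤ m := by exact_mod_cast i.2
        simp at hneg
        linarith
    have hσ' : σ (Fin.last m) = Fin.last m := by
      rw [Equiv.Perm.inv_eq_iff_eq] at hσ; exact hσ.symm
    obtain ⟨τ, hτ⟩ := trExt_surj σ hσ'
    refine ⟨(τ, fun i => ε i.castSucc), ?_⟩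
    simp only [Prod.mk.injEq]
    refine ⟨hτ, ?_⟩
    funext i
    refine Fin.lastCases ?_ ?_ i
    · simp [hεl]
    · intro i; simp
  · rintro ⟨σ, ε⟩
    simp only
    rw [tr_kostant_rec _ l]
    · congr 1
      · simp [wDet, trExt_sign, Fin.prod_univ_castSucc]
      · congr 1
        refine Finset.sum_congr rfl (fun τ _ => ?_)
        congr 1
        congr 1
        funext i
        simp only [Pi.sub_apply, wAct, Pi.add_apply, rhoB, trExt_inv_castSucc, Fin.snoc_castSucc,
          Fin.val_castSucc]
    · simp only [Pi.sub_apply, wAct, Pi.add_apply, rhoB, trExt_inv_last, Fin.snoc_last,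
          Fin.val_last]
      simp
      linarith

theorem tr_KB_reduce {m : ℕ} (ν μ : Fin (m + 1) → ℤ) (l : ℕ) (hν0 : ∀ i, 0 ≤ ν i)
    (hμ0 : ∀ i, 0 ≤ μ i)
    (h1 : ∀ i : Fin m, ν i.castSucc ≤ μ (Fin.last m)) (hl : ν (Fin.last m) - μ (Fin.last m) = l) :
    KB (m + 1) (fun i => (ν i : ℚ)) (fun i => (μ i : ℚ)) = PowerSeries.X ^ l *
      ∑ τ ∈ Finset.piAntidiag (Finset.univ : Finset (Option (Fin m × Bool))) l,
        trAlt (fun y => kostantQ (rootsB m) (y - ((fun i : Fin m => (μ i.castSucc : ℚ)) + rhoB m)))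
        (((fun i : Fin m => (ν i.castSucc : ℚ)) + rhoB m) + ∑ j, (τ j : ℚ) • trX m j) := by
  rw [tr_KB_expand ν μ l hν0 hμ0 h1 hl]
  simp only [← mul_smul_comm]
  rw [← Finset.mul_sum]
  congr 1
  unfold trAlt
  simp only [← Fintype.sum_prod_type']
  rw [Finset.sum_comm]
  refine Finset.sum_congr rfl (fun p _ => ?_)
  rw [← Finset.smul_sum]
  congr 1
  rw [← tr_move (fun y => kostantQ (rootsB m) (y - ((fun i : Fin m => (μ i.castSucc : ℚ)) + rhoB m)))]
  refine Finset.sum_congr rfl (fun τ _ => ?_)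
  congr 1
  abel
open scoped BigOperators

noncomputable section
/-- `1/(1-t^2)` -/
def trQ (S : Type*) [CommRing S] : PowerSeries S := PowerSeries.mk fun n => if Even n then 1 else 0
/-- `1/(1-t)` -/
def trU (S : Type*) [CommRing S] : PowerSeries S := PowerSeries.mk fun _ => 1
/-- `1/(1+t)` -/
def trV (S : Type*) [CommRing S] : PowerSeries S := PowerSeries.mk fun n => (-1) ^ n
end

theorem trQ_eq (S : Type*) [CommRing S] : trQ S * (1 - PowerSeries.X ^ 2) = 1 := by
  ext n
  rw [mul_sub, mul_one, map_sub, PowerSeries.coeff_mul_X_pow', PowerSeries.coeff_one]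
  simp only [trQ, PowerSeries.coeff_mk]
  rcases n with _ | _ | n
  · simp
  · simp
  · simp [Nat.even_add_one]

theorem trU_eq (S : Type*) [CommRing S] : trU S * (1 - PowerSeries.X) = 1 := by
  ext n
  have := PowerSeries.coeff_mul_X_pow' (trU S) 1 n
  rw [mul_sub, mul_one, map_sub, ← pow_one PowerSeries.X, this, PowerSeries.coeff_one]
  simp only [trU, PowerSeries.coeff_mk]
  rcases n with _ | n
  · simp
  · simp

theorem trV_eq (S : Type*) [CommRing S] : trV S * (1 + PowerSeries.X) = 1 := by
  ext n
  have := PowerSeries.coeff_mul_X_pow' (trV S) 1 n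
  rw [mul_add, mul_one, map_add, ← pow_one PowerSeries.X, this, PowerSeries.coeff_one]
  simp only [trV, PowerSeries.coeff_mk]
  rcases n with _ | n
  · simp
  · simp [pow_succ]

theorem trQV (S : Type*) [CommRing S] : trQ S * (1 - PowerSeries.X) = trV S := by
  linear_combination (-(trQ S) * (1 - PowerSeries.X)) * trV_eq S + trV S * trQ_eq S

theorem trUV (S : Type*) [CommRing S] : trU S * trV S = trQ S := by
  rw [← trQV]
  linear_combination trQ S * trU_eq S

theorem trUQ (S : Type*) [CommRing S] : trU S = trQ S * (1 + PowerSeries.X) := by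
  linear_combination (-trU S) * trQ_eq S + (trQ S * (1 + PowerSeries.X)) * trU_eq S

/-- the weights -/
noncomputable def trW (S : Type*) [CommRing S] (d : ℕ) : PowerSeries S := if d = 0 then trV S else 1

theorem tr_kernel_aux (S : Type*) [CommRing S] (s k : ℕ) (h : 2 * k ≤ s) :
    trQ S * (PowerSeries.X ^ (s - 2 * k) - PowerSeries.X ^ (s + 1)) =
      ∑ d ∈ Finset.range (k + 1), trW S d * PowerSeries.X ^ (s - 2 * d) := by
  induction k with
  | zero =>
    simp only [trW, zero_add, Finset.sum_range_one, mul_zero, Nat.sub_zero, if_true, ← trQV]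
    ring
  | succ k ih =>
    rw [Finset.sum_range_succ, ← ih (by omega)]
    obtain ⟨u, rfl⟩ : ∃ u, s = u + 2 * (k + 1) := ⟨s - 2 * (k + 1), by omega⟩
    have e1 : u + 2 * (k + 1) - 2 * (k + 1) = u := by omega
    have e2 : u + 2 * (k + 1) - 2 * k = u + 2 := by omega
    rw [e1, e2]
    simp only [trW, Nat.succ_ne_zero, if_false]
    linear_combination (PowerSeries.X ^ u) * trQ_eq S

theorem tr_kernel (S : Type*) [CommRing S] (a b : ℕ) :
    trQ S * PowerSeries.X ^ ((b : ℤ) - a).natAbs - trQ S * PowerSeries.X ^ ((-1 - (b : ℤ)) - a).natAbs =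
      ∑ d ∈ Finset.range (min a b + 1), trW S d * PowerSeries.X ^ (a + b - 2 * d) := by
  rw [← tr_kernel_aux S (a + b) (min a b) (by omega), mul_sub]
  congr 3 <;> omega

/-- folding by sign changes -/
theorem tr_fold {R : Type*} [CommRing R] {m : ℕ} (N : ℕ) (h : Fin m → ℤ → R)
    (A : (Fin m → ℤ) → R)
    (hA : ∀ (η : Fin m → Bool) (c : Fin m → ℤ), A (fun i => if η i then -1 - c i else c i) =
      (∏ i, (if η i then (-1 : R) else 1)) * A c) :
    ∑ c ∈ Fintype.piFinset (fun _ : Fin m => Finset.Ico (-(N : ℤ)) N), (∏ i, h i (c i)) * A c =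
    ∑ b ∈ Fintype.piFinset (fun _ : Fin m => Finset.range N),
      (∏ i, (h i (b i) - h i (-1 - (b i : ℤ)))) * A (fun i => (b i : ℤ)) := by
  have e : ∀ b : Fin m → ℕ, (∏ i, (h i (b i) - h i (-1 - (b i : ℤ)))) * A (fun i => (b i : ℤ)) =
      ∑ η : Fin m → Bool, (∏ i, h i (if η i then -1 - (b i : ℤ) else b i)) *
        A (fun i => if η i then -1 - (b i : ℤ) else b i) := by
    intro b
    have e1 : ∀ i, h i (b i) - h i (-1 - (b i : ℤ)) = ∑ η ∈ (Finset.univ : Finset Bool),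
        (if η then (-1 : R) else 1) * h i (if η then -1 - (b i : ℤ) else b i) := by
      intro i; simp; ring
    simp only [e1]
    rw [Finset.prod_univ_sum, Fintype.piFinset_univ, Finset.sum_mul]
    refine Finset.sum_congr rfl (fun η _ => ?_)
    rw [hA η (fun i => (b i : ℤ)), Finset.prod_mul_distrib]
    ring
  simp only [e]
  rw [← Finset.sum_product']
  symm
  refine Finset.sum_nbij' (fun p i => if p.2 i then -1 - (p.1 i : ℤ) else p.1 i)
    (fun c => (fun i => if c i < 0 then (-1 - c i).toNat else (c i).toNat, fun i => decide (c i < 0)))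
    ?_ ?_ ?_ ?_ ?_
  · rintro ⟨b, η⟩ hb
    simp only [Finset.mem_product, Fintype.mem_piFinset, Finset.mem_range, Finset.mem_univ,
      and_true, Finset.mem_Ico] at hb ⊢
    intro i
    have := hb i
    split_ifs <;> omega
  · intro c hc
    simp only [Finset.mem_product, Fintype.mem_piFinset, Finset.mem_range, Finset.mem_univ,
      and_true, Finset.mem_Ico] at hc ⊢
    intro i
    have := hc i
    split_ifs <;> omega
  · rintro ⟨b, η⟩ hb
    simp only [Prod.mk.injEq]
    constructor
    · funext i
      cases η i <;> simp <;> omega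
    · funext i
      rcases Bool.eq_false_or_eq_true (η i) with hη | hη
      · refine Eq.trans (decide_eq_true_iff.2 ?_) hη.symm
        simp only [hη, if_true]
        omega
      · refine Eq.trans (decide_eq_false_iff_not.2 ?_) hη.symm
        simp only [hη, Bool.false_eq_true, if_false]
        omega
  · intro c hc
    funext i
    simp only [decide_eq_true_eq]
    split_ifs <;> omega
  · rintro ⟨b, η⟩ hb
    rfl

theorem tr_coeff_prod_congr {S : Type*} [CommRing S] {ι : Type*} [Fintype ι] [DecidableEq ι]
    (f g : ι → PowerSeries S) (l : ℕ)
    (h : ∀ i, ∀ r ≤ l, PowerSeries.coeff r (f i) = PowerSeries.coeff r (g i)) :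
    PowerSeries.coeff l (∏ i, f i) = PowerSeries.coeff l (∏ i, g i) := by
  rw [PowerSeries.coeff_prod, PowerSeries.coeff_prod]
  refine Finset.sum_congr rfl (fun r hr => Finset.prod_congr rfl (fun i _ => h i _ ?_))
  rw [Finset.mem_finsuppAntidiag] at hr
  rw [← hr.1]
  exact Finset.single_le_sum (f := fun i => r i) (fun _ _ => Nat.zero_le _) (Finset.mem_univ i)

theorem tr_coeff_Q {S : Type*} [CommRing S] (θ : ℤ) (l r : ℕ) (hr : r ≤ l) :
    PowerSeries.coeff r (trQ S * PowerSeries.X ^ θ.natAbs) =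
    PowerSeries.coeff r (∑ p ∈ (Finset.range (l + 1) ×ˢ Finset.range (l + 1)).filter
      (fun p : ℕ × ℕ => (p.2 : ℤ) - p.1 = θ), (PowerSeries.X : PowerSeries S) ^ (p.1 + p.2)) := by
  rw [PowerSeries.coeff_mul_X_pow', map_sum]
  simp only [PowerSeries.coeff_X_pow, trQ, PowerSeries.coeff_mk]
  by_cases h : θ.natAbs ≤ r ∧ Even (r - θ.natAbs)
  · obtain ⟨h1, h2⟩ := h
    rw [if_pos h1, if_pos h2]
    obtain ⟨u, hu⟩ := h2
    rw [Finset.sum_eq_single ((((r : ℤ) - θ) / 2).toNat, (((r : ℤ) + θ) / 2).toNat)]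
    · rw [if_pos]
      simp only
      omega
    · rintro ⟨x, y⟩ hp hne
      rw [if_neg]
      intro h5
      apply hne
      simp only [Finset.mem_filter] at hp
      simp only at h5
      ext <;> simp only <;> omega
    · intro hn
      exfalso
      apply hn
      simp only [Finset.mem_filter, Finset.mem_product, Finset.mem_range]
      omega
  · rw [Finset.sum_eq_zero]
    · split_ifs with h1 h2
      · exact absurd ⟨h1, h2⟩ h
      · rfl
      · rfl
    · rintro ⟨x, y⟩ hp
      rw [if_neg]
      intro h5
      simp only [Finset.mem_filter] at hp
      simp only at h5
      apply h
      refine ⟨by omega, ⟨min x y, by omega⟩⟩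

theorem tr_coeff_U {S : Type*} [CommRing S] (l r : ℕ) (hr : r ≤ l) :
    PowerSeries.coeff r (trU S) =
    PowerSeries.coeff r (∑ k ∈ Finset.range (l + 1), (PowerSeries.X : PowerSeries S) ^ k) := by
  rw [map_sum]
  simp only [PowerSeries.coeff_X_pow, trU, PowerSeries.coeff_mk]
  rw [Finset.sum_ite_eq, if_pos]
  simp; omega

theorem tr_coeff_M {S : Type*} [CommRing S] {m : ℕ} (θ : Fin m → ℤ) (l : ℕ) :
    PowerSeries.coeff l (trU S * ∏ i, (trQ S * PowerSeries.X ^ (θ i).natAbs)) =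
    ∑ k ∈ Finset.range (l + 1),
      ∑ p ∈ (Fintype.piFinset (fun _ : Fin m => (Finset.range (l + 1) ×ˢ Finset.range (l + 1)))),
        if (∀ i, ((p i).2 : ℤ) - (p i).1 = θ i) ∧ k + ∑ i, ((p i).1 + (p i).2) = l
          then (1 : S) else 0 := by
  have e := tr_coeff_prod_congr (S := S)
    (fun o : Option (Fin m) => o.elim (trU S) (fun i => trQ S * PowerSeries.X ^ (θ i).natAbs))
    (fun o : Option (Fin m) => o.elim (∑ k ∈ Finset.range (l + 1), (PowerSeries.X : PowerSeries S) ^ k)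
      (fun i => ∑ p ∈ (Finset.range (l + 1) ×ˢ Finset.range (l + 1)).filter
      (fun p : ℕ × ℕ => (p.2 : ℤ) - p.1 = θ i), (PowerSeries.X : PowerSeries S) ^ (p.1 + p.2))) l
    (by
      rintro (_ | i) r hr
      · exact tr_coeff_U l r hr
      · exact tr_coeff_Q (θ i) l r hr)
  rw [Fintype.prod_option, Fintype.prod_option] at e
  simp only [Option.elim] at e
  rw [e, Finset.prod_univ_sum, Finset.sum_mul_sum, map_sum]
  refine Finset.sum_congr rfl (fun k _ => ?_)
  rw [map_sum]
  simp only [ite_and]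
  rw [← Finset.sum_filter]
  refine Finset.sum_congr ?_ ?_
  · ext p
    simp only [Fintype.mem_piFinset, Finset.mem_filter, forall_and]
  · intro p _
    rw [Finset.prod_pow_eq_pow_sum, ← pow_add, PowerSeries.coeff_X_pow]
    simp only [eq_comm]

theorem tr_tau_sum {S : Type*} [CommRing S] {m : ℕ} (N l : ℕ) (a : Fin m → ℕ)
    (haN : ∀ i, a i + l < N) (A : (Fin m → ℤ) → S) :
    ∑ τ ∈ Finset.piAntidiag (Finset.univ : Finset (Option (Fin m × Bool))) l,
      A (fun i => (a i : ℤ) + ((τ (some (i, true)) : ℤ) - τ (some (i, false)))) =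
    PowerSeries.coeff l (trU S *
      ∑ c ∈ Fintype.piFinset (fun _ : Fin m => Finset.Ico (-(N : ℤ)) N),
        (∏ i, (trQ S * PowerSeries.X ^ (c i - a i).natAbs)) * PowerSeries.C (A c)) := by
  rw [Finset.mul_sum, map_sum]
  simp only [← mul_assoc, PowerSeries.coeff_mul_C, tr_coeff_M]
  simp only [Finset.sum_mul]
  rw [Finset.sum_comm]
  have hstep : ∀ k ∈ Finset.range (l + 1),
      ∑ c ∈ Fintype.piFinset (fun _ : Fin m => Finset.Ico (-(N : ℤ)) N),
      ∑ p ∈ (Fintype.piFinset (fun _ : Fin m => (Finset.range (l + 1) ×ˢ Finset.range (l + 1)))),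
        (if (∀ i, ((p i).2 : ℤ) - (p i).1 = c i - a i) ∧ k + ∑ i, ((p i).1 + (p i).2) = l
          then (1 : S) else 0) * A c =
      ∑ p ∈ (Fintype.piFinset (fun _ : Fin m => (Finset.range (l + 1) ×ˢ Finset.range (l + 1)))),
        if k + ∑ i, ((p i).1 + (p i).2) = l then
          A (fun i => (a i : ℤ) + (((p i).2 : ℤ) - (p i).1)) else 0 := by
    intro k _
    rw [Finset.sum_comm]
    refine Finset.sum_congr rfl (fun p hp => ?_)
    rw [Finset.sum_eq_single (fun i => (a i : ℤ) + (((p i).2 : ℤ) - (p i).1))]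
    · simp
    · intro c _ hc
      rw [if_neg, zero_mul]
      rintro ⟨h1, _⟩
      apply hc
      funext i
      have := h1 i
      omega
    · intro hn
      exfalso
      apply hn
      simp only [Fintype.mem_piFinset, Finset.mem_product, Finset.mem_range, Finset.mem_Ico] at hp ⊢
      intro i
      have := hp i
      have := haN i
      omega
  rw [Finset.sum_congr rfl hstep, ← Finset.sum_product', ← Finset.sum_filter]
  refine Finset.sum_nbij'
    (fun τ => (τ none, fun i => (τ (some (i, false)), τ (some (i, true)))))
    (fun q o => match o with
      | none => q.1
      | some (i, b) => if b then (q.2 i).2 else (q.2 i).1) ?_ ?_ ?_ ?_ ?_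
  · intro τ hτ
    rw [Finset.mem_piAntidiag] at hτ
    have hle : ∀ o, τ o ≤ l := by
      intro o
      rw [← hτ.1]
      exact Finset.single_le_sum (fun _ _ => Nat.zero_le _) (Finset.mem_univ o)
    have hs := hτ.1
    rw [Fintype.sum_option, Fintype.sum_prod_type] at hs
    simp only [Fintype.sum_bool] at hs
    simp only [Finset.mem_filter, Finset.mem_product, Fintype.mem_piFinset, Finset.mem_range,
      Nat.lt_succ_iff, hle, and_self, implies_true, true_and]
    rw [← hs]
    congr 1
    exact Finset.sum_congr rfl (fun i _ => add_comm _ _)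
  · rintro ⟨k, p⟩ hp
    simp only [Finset.mem_filter] at hp
    rw [Finset.mem_piAntidiag]
    refine ⟨?_, by simp⟩
    rw [Fintype.sum_option, Fintype.sum_prod_type]
    simp only [Fintype.sum_bool]
    rw [← hp.2]
    simp [add_comm]
  · intro τ _
    funext o
    rcases o with _ | ⟨i, b⟩
    · rfl
    · cases b <;> rfl
  · rintro ⟨k, p⟩ _
    rfl
  · intro τ _
    rfl
open scoped BigOperators

theorem tr_coeff_QX {S : Type*} [CommRing S] (l s : ℕ) (x : S) :
    PowerSeries.coeff l (trQ S * PowerSeries.X ^ s * PowerSeries.C x) =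
    ∑ p ∈ Finset.range (l + 1) ×ˢ Finset.range (l + 1),
      if p.1 + 2 * p.2 = l then (if s = p.1 then x else 0) else 0 := by
  rw [PowerSeries.coeff_mul_C, PowerSeries.coeff_mul_X_pow']
  simp only [trQ, PowerSeries.coeff_mk]
  by_cases h : s ≤ l ∧ Even (l - s)
  · obtain ⟨h1, u, hu⟩ := h
    rw [if_pos h1, if_pos ⟨u, hu⟩, Finset.sum_eq_single (s, u)]
    · rw [if_pos, if_pos rfl, one_mul]
      simp only
      omega
    · rintro ⟨x', y'⟩ hp hne
      simp only
      split_ifs with h3 h4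
      · exfalso
        apply hne
        ext <;> simp only <;> omega
      · rfl
      · rfl
    · intro hn
      exfalso
      apply hn
      simp only [Finset.mem_product, Finset.mem_range]
      omega
  · have : (if s ≤ l then (if Even (l - s) then (1 : S) else 0) else 0) = 0 := by
      split_ifs with h1 h2
      · exact absurd ⟨h1, h2⟩ h
      · rfl
      · rfl
    rw [this, zero_mul, Finset.sum_eq_zero]
    rintro ⟨x', y'⟩ hp
    simp only
    split_ifs with h3 h4
    · exfalso
      apply h
      exact ⟨by omega, ⟨y', by omega⟩⟩
    · rfl
    · rfl

theorem tr_U_W {S : Type*} [CommRing S] (d : ℕ) :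
    trU S * trW S d = ∑ b : Bool, if (d = 0 → b = false) then
      trQ S * PowerSeries.X ^ (cond b 1 0) else 0 := by
  by_cases h : d = 0
  · simp [trW, h, trUV]
  · simp only [trW, h, if_false, Fintype.sum_bool, trUQ S, false_imp_iff, if_true, cond_true, cond_false]
    ring

theorem tr_prodW {S : Type*} [CommRing S] {k : ℕ} (a c d : Fin (k + 1) → ℕ) (h : TrInter a c d) :
    ∏ i, trW S (d i) = trW S (d 0) := by
  rw [Fin.prod_univ_succ, Finset.prod_eq_one, mul_one]
  intro i _
  have := h.2.2.1 i.castSucc (by simp)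
  rw [trW, if_neg]
  intro h0
  have e : (⟨(i.castSucc : ℕ) + 1, by simp⟩ : Fin (k + 1)) = i.succ := by ext; simp
  rw [e, h0] at this
  omega

open Classical in
theorem tr_comb {S : Type*} [CommRing S] (h2S : ∀ x : S, x = -x → x = 0) {k : ℕ} (N l : ℕ)
    (a : Fin (k + 1) → ℕ) (ha : StrictMono a)
    (haN : ∀ i, a i + l < N) (A : (Fin (k + 1) → ℤ) → S)
    (hA : ∀ (η : Fin (k + 1) → Bool) (c : Fin (k + 1) → ℤ),
      A (fun i => if η i then -1 - c i else c i) = (∏ i, (if η i then (-1 : S) else 1)) * A c)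
    (hP : ∀ i j (c : Fin (k + 1) → ℤ), i ≠ j → A (c ∘ Equiv.swap i j) = - A c) :
    ∑ τ ∈ Finset.piAntidiag (Finset.univ : Finset (Option (Fin (k + 1) × Bool))) l,
      A (fun i => (a i : ℤ) + ((τ (some (i, true)) : ℤ) - τ (some (i, false)))) =
    ∑ p ∈ Finset.range (l + 1) ×ˢ Finset.range (l + 1),
      if p.1 + 2 * p.2 = l then
        ∑ c ∈ Fintype.piFinset (fun _ : Fin (k + 1) => Finset.range N),
          ((((Fintype.piFinset (fun _ : Fin (k + 1) => Finset.range N)) ×ˢ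
            (Finset.univ : Finset Bool)).filter (fun x => TrInter a c x.1 ∧
              (x.1 0 = 0 → x.2 = false) ∧ (cond x.2 1 0) + ∑ i, (a i + c i - 2 * x.1 i) = p.1)).card : ℤ)
            • A (fun i => (c i : ℤ))
      else 0 := by
  rw [tr_tau_sum N l a haN A]
  have hf := tr_fold N (fun i z => trQ S * PowerSeries.X ^ (z - a i).natAbs)
    (fun c => PowerSeries.C (A c)) (by
      intro η c
      rw [hA, map_mul, map_prod]
      congr 1
      refine Finset.prod_congr rfl (fun i _ => ?_)
      split_ifs <;> simp)
  rw [hf]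
  simp only [tr_kernel]
  rw [tr_pieri (fun x hx => by
      ext n
      have := congrArg (PowerSeries.coeff n) hx
      rw [map_neg] at this
      simpa using h2S _ this) N PowerSeries.X (trW S) (fun c => PowerSeries.C (A fun i => (c i : ℤ)))
      (by
        intro i j d hij
        have := hP i j (fun i => (d i : ℤ)) hij
        simp only [← map_neg, ← this]
        rfl) a ha (fun i => by have := haN i; omega)]
  have key : ∀ c d : Fin (k + 1) → ℕ, TrInter a c d →
      PowerSeries.coeff l (trU S * (((∏ i, trW S (d i)) *
        PowerSeries.X ^ (∑ i, (a i + c i - 2 * d i))) * PowerSeries.C (A fun i => (c i : ℤ)))) =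
      ∑ b : Bool, ∑ p ∈ Finset.range (l + 1) ×ˢ Finset.range (l + 1),
        if p.1 + 2 * p.2 = l then (if (d 0 = 0 → b = false) ∧
          (cond b 1 0) + ∑ i, (a i + c i - 2 * d i) = p.1 then A (fun i => (c i : ℤ)) else 0) else 0 := by
    intro c d h
    rw [tr_prodW a c d h]
    simp only [← mul_assoc]
    rw [tr_U_W, Finset.sum_mul, Finset.sum_mul, map_sum]
    refine Finset.sum_congr rfl (fun b _ => ?_)
    by_cases hb : d 0 = 0 → b = false
    · rw [if_pos hb, mul_assoc (trQ S), ← pow_add, tr_coeff_QX]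
      refine Finset.sum_congr rfl (fun p _ => ?_)
      simp only [and_iff_right hb]
    · rw [if_neg hb]
      simp [hb]
  rw [Finset.mul_sum, map_sum]
  have step : ∀ c : Fin (k + 1) → ℕ, PowerSeries.coeff l (trU S *
      ∑ d ∈ (Fintype.piFinset (fun _ : Fin (k + 1) => Finset.range N)).filter (fun d => TrInter a c d),
        ((∏ i, trW S (d i)) * PowerSeries.X ^ (∑ i, (a i + c i - 2 * d i))) *
          PowerSeries.C (A fun i => (c i : ℤ))) =
      ∑ p ∈ Finset.range (l + 1) ×ˢ Finset.range (l + 1), if p.1 + 2 * p.2 = l then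
          ((((Fintype.piFinset (fun _ : Fin (k + 1) => Finset.range N)) ×ˢ
            (Finset.univ : Finset Bool)).filter (fun x => TrInter a c x.1 ∧
              (x.1 0 = 0 → x.2 = false) ∧ (cond x.2 1 0) + ∑ i, (a i + c i - 2 * x.1 i) = p.1)).card : ℤ)
            • A (fun i => (c i : ℤ)) else 0 := by
    intro c
    rw [Finset.mul_sum, map_sum,
      Finset.sum_congr rfl (fun d hd => key c d (Finset.mem_filter.1 hd).2), Finset.sum_filter]
    have e1 : ∀ d : Fin (k + 1) → ℕ, (if TrInter a c d then
      ∑ b : Bool, ∑ p ∈ Finset.range (l + 1) ×ˢ Finset.range (l + 1),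
        (if p.1 + 2 * p.2 = l then (if (d 0 = 0 → b = false) ∧
          (cond b 1 0) + ∑ i, (a i + c i - 2 * d i) = p.1 then A (fun i => (c i : ℤ)) else 0) else 0)
          else 0) =
      ∑ b : Bool, ∑ p ∈ Finset.range (l + 1) ×ˢ Finset.range (l + 1),
        if p.1 + 2 * p.2 = l then (if TrInter a c d ∧ (d 0 = 0 → b = false) ∧
          (cond b 1 0) + ∑ i, (a i + c i - 2 * d i) = p.1 then A (fun i => (c i : ℤ)) else 0) else 0 := by
      intro d
      by_cases h : TrInter a c d
      · simp only [h, if_true, true_and]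
      · simp only [h, if_false, false_and, ite_self, Finset.sum_const_zero]
    simp only [e1]
    rw [← Finset.sum_product', Finset.sum_comm]
    refine Finset.sum_congr rfl (fun p _ => ?_)
    by_cases hp : p.1 + 2 * p.2 = l
    · simp only [hp, if_true]
      rw [← Finset.sum_filter, Finset.sum_const, natCast_zsmul]
    · simp only [hp, if_false, Finset.sum_const_zero]
  rw [Finset.sum_congr rfl (fun c _ => step c), Finset.sum_comm]
  refine Finset.sum_congr rfl (fun p _ => ?_)
  by_cases hp : p.1 + 2 * p.2 = l
  · simp only [hp, if_true]
  · simp only [hp, if_false, Finset.sum_const_zero]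
open scoped BigOperators

/-- unshift -/
def trPsi {m : ℕ} (c : Fin m → ℕ) : Fin m → ℚ := fun i => (c i : ℚ) - ((i : ℕ) : ℚ)

open Classical in
theorem tr_bPieri {k : ℕ} (N : ℕ) (a c : Fin (k + 1) → ℕ) (haN : ∀ i, a i < N) (r : ℕ) :
    bPieri (trPsi a) (trPsi c) r =
    (((Fintype.piFinset (fun _ : Fin (k + 1) => Finset.range N)) ×ˢ
            (Finset.univ : Finset Bool)).filter (fun x => TrInter a c x.1 ∧
              (x.1 0 = 0 → x.2 = false) ∧
              (cond x.2 1 0) + ∑ i, (a i + c i - 2 * x.1 i) = r)).card := by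
  unfold bPieri
  rw [← Fintype.card_coe, ← Nat.card_eq_fintype_card]
  have hq : ∀ t : (Fin (k + 1) → ℕ) × (Fin (k + 1) → ℕ) × Bool,
      (((cond t.2.2 1 0) + ∑ i, (t.1 i + t.2.1 i)) = r ∧
    (∀ i, ((t.2.1 i : ℚ) - (t.1 i : ℚ)) = trPsi c i - trPsi a i) ∧
    (∀ i : Fin (k + 1), ∀ h : (i : ℕ) + 1 < k + 1,
      trPsi c i ≤ trPsi c ⟨(i : ℕ) + 1, h⟩ - (t.2.1 ⟨(i : ℕ) + 1, h⟩ : ℚ)) ∧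
    (∀ i : Fin (k + 1), ∀ h : (i : ℕ) + 1 < k + 1,
      trPsi c i + (t.1 i : ℚ) - (t.2.1 i : ℚ) ≤
        trPsi c ⟨(i : ℕ) + 1, h⟩ - (t.2.1 ⟨(i : ℕ) + 1, h⟩ : ℚ)) ∧
    (∀ h : 0 < k + 1,
      if t.2.2 then (0 : ℚ) < trPsi c ⟨0, h⟩ - (t.2.1 ⟨0, h⟩ : ℚ)
      else (0 : ℚ) ≤ trPsi c ⟨0, h⟩ - (t.2.1 ⟨0, h⟩ : ℚ))) ↔
      (((cond t.2.2 1 0) + ∑ i, (t.1 i + t.2.1 i)) = r ∧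
      (∀ i, t.2.1 i + a i = c i + t.1 i) ∧ (∀ i, t.2.1 i ≤ c i) ∧
      (∀ i : Fin (k + 1), ∀ h : (i : ℕ) + 1 < k + 1,
        c i + t.2.1 ⟨(i : ℕ) + 1, h⟩ < c ⟨(i : ℕ) + 1, h⟩) ∧
      (∀ i : Fin (k + 1), ∀ h : (i : ℕ) + 1 < k + 1,
        a i + t.2.1 ⟨(i : ℕ) + 1, h⟩ < c ⟨(i : ℕ) + 1, h⟩) ∧
      (t.2.2 = true → t.2.1 0 < c 0)) := by
    rintro ⟨x, y, b⟩
    simp only [trPsi]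
    have e1 : ∀ i, ((y i : ℚ) - x i = (c i : ℚ) - ((i : ℕ) : ℚ) - ((a i : ℚ) - ((i : ℕ) : ℚ))) ↔
        y i + a i = c i + x i := by
      intro i
      rw [← @Nat.cast_inj ℚ]
      push_cast
      constructor <;> intro h <;> linarith
    simp only [e1]
    have e2 : ∀ i : Fin (k + 1), ∀ h : (i : ℕ) + 1 < k + 1, ((c i : ℚ) - ((i : ℕ) : ℚ) ≤
        (c ⟨(i : ℕ) + 1, h⟩ : ℚ) - (((i : ℕ) + 1 : ℕ) : ℚ) - (y ⟨(i : ℕ) + 1, h⟩ : ℚ)) ↔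
        c i + y ⟨(i : ℕ) + 1, h⟩ < c ⟨(i : ℕ) + 1, h⟩ := by
      intro i h
      rw [Nat.lt_iff_add_one_le, ← @Nat.cast_le ℚ]
      push_cast
      constructor <;> intro h <;> linarith
    simp only [e2]
    refine and_congr_right (fun _ => and_congr_right (fun hE => ?_))
    have e3 : ∀ i : Fin (k + 1), ∀ h : (i : ℕ) + 1 < k + 1,
        ((c i : ℚ) - ((i : ℕ) : ℚ) + x i - y i ≤
        (c ⟨(i : ℕ) + 1, h⟩ : ℚ) - (((i : ℕ) + 1 : ℕ) : ℚ) - (y ⟨(i : ℕ) + 1, h⟩ : ℚ)) ↔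
        a i + y ⟨(i : ℕ) + 1, h⟩ < c ⟨(i : ℕ) + 1, h⟩ := by
      intro i h
      rw [Nat.lt_iff_add_one_le, ← @Nat.cast_le ℚ]
      have := hE i
      rw [← @Nat.cast_inj ℚ] at this
      push_cast at this ⊢
      constructor <;> intro h <;> linarith
    simp only [e3]
    have e4 : ((∀ h : 0 < k + 1,
      if b = true then (0 : ℚ) < (c ⟨0, h⟩ : ℚ) - ((0 : ℕ) : ℚ) - (y ⟨0, h⟩ : ℚ)
      else (0 : ℚ) ≤ (c ⟨0, h⟩ : ℚ) - ((0 : ℕ) : ℚ) - (y ⟨0, h⟩ : ℚ))) ↔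
      (y 0 ≤ c 0 ∧ (b = true → y 0 < c 0)) := by
      have z : ∀ h, (⟨0, h⟩ : Fin (k + 1)) = 0 := fun _ => rfl
      simp only [z, Nat.succ_pos, forall_true_left, Nat.cast_zero, sub_zero]
      cases b
      · simp
      · simp
        exact le_of_lt
    rw [e4]
    constructor
    · rintro ⟨p1, p2, p3, p4⟩
      refine ⟨?_, p1, p2, p4⟩
      intro i
      induction i using Fin.cases with
      | zero => exact p3
      | succ i =>
        have := p1 i.castSucc (by simp)
        have e : (⟨(i.castSucc : ℕ) + 1, by simp⟩ : Fin (k + 1)) = i.succ := by ext; simp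
        rw [e] at this
        omega
    · rintro ⟨p0, p1, p2, p4⟩
      exact ⟨p1, p2, p0 0, p4⟩
  refine Nat.card_congr (Equiv.subtypeEquivRight hq |>.trans ?_)
  refine
    { toFun := fun t => ⟨(fun i => c i - t.1.2.1 i, t.1.2.2), ?_⟩
      invFun := fun x => ⟨(fun i => a i - x.1.1 i, fun i => c i - x.1.1 i, x.1.2), ?_⟩
      left_inv := ?_
      right_inv := ?_ }
  · obtain ⟨⟨x, y, b⟩, h0, h1, h2, h3, h4, h5⟩ := t
    simp only at h0 h1 h2 h3 h4 h5
    simp only [Finset.mem_filter, Finset.mem_product, Finset.mem_univ, and_true,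
      Fintype.mem_piFinset, Finset.mem_range]
    refine ⟨fun i => ?_, ⟨fun i => ?_, fun i => ?_, fun i h => ?_, fun i h => ?_⟩, ?_, ?_⟩
    · have := h1 i
      have := haN i
      have := h2 i
      omega
    · have := h1 i
      have := h2 i
      simp only
      omega
    · simp only
      omega
    · have := h4 i h
      simp only
      omega
    · have := h3 i h
      simp only
      omega
    · intro hz
      by_contra hb
      have := h5 (by simpa using hb)
      omega
    · rw [← h0]
      congr 1
      refine Finset.sum_congr rfl (fun i _ => ?_)
      have := h1 i
      have := h2 i
      omega
  · obtain ⟨⟨d, b⟩, h⟩ := x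
    simp only [Finset.mem_filter, Finset.mem_product, Finset.mem_univ, and_true,
      Fintype.mem_piFinset, Finset.mem_range] at h
    obtain ⟨_, ⟨h1, h2, h3, h4⟩, h5, h6⟩ := h
    simp only
    refine ⟨?_, fun i => ?_, fun i => ?_, fun i h => ?_, fun i h => ?_, ?_⟩
    · rw [← h6]
      congr 1
      refine Finset.sum_congr rfl (fun i _ => ?_)
      have := h1 i
      have := h2 i
      omega
    · have := h1 i
      have := h2 i
      omega
    · omega
    · have := h4 i h
      have := h2 ⟨(i : ℕ) + 1, h⟩
      omega
    · have := h3 i h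
      have := h2 ⟨(i : ℕ) + 1, h⟩
      omega
    · intro hb
      have h20 := h2 0
      have : d 0 ≠ 0 := by
        intro hz
        have := h5 hz
        rw [hb] at this
        exact absurd this (by simp)
      omega
  · rintro ⟨⟨x, y, b⟩, h0, h1, h2, h3, h4, h5⟩
    simp only at h0 h1 h2 h3 h4 h5
    simp only [Subtype.mk.injEq, Prod.mk.injEq, and_true]
    constructor
    · funext i
      have := h1 i
      have := h2 i
      omega
    · funext i
      have := h2 i
      omega
  · rintro ⟨⟨d, b⟩, h⟩
    simp only [Finset.mem_filter, Finset.mem_product, Finset.mem_univ, and_true,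
      Fintype.mem_piFinset, Finset.mem_range] at h
    obtain ⟨_, ⟨h1, h2, h3, h4⟩, h5, h6⟩ := h
    simp only [Subtype.mk.injEq, Prod.mk.injEq, and_true]
    funext i
    have := h2 i
    omega

theorem tr_bPieri_ne {k : ℕ} (a c : Fin (k + 1) → ℕ) (r : ℕ)
    (h : bPieri (trPsi a) (trPsi c) r ≠ 0) : StrictMono c ∧ ∀ i, c i ≤ a i + r := by
  classical
  rw [tr_bPieri (∑ i, a i + 1) a c (fun i => Nat.lt_succ_of_le
    (Finset.single_le_sum (fun _ _ => Nat.zero_le _) (Finset.mem_univ i)))] at h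
  obtain ⟨⟨d, b⟩, hx⟩ := Finset.card_ne_zero.1 h
  simp only [Finset.mem_filter] at hx
  obtain ⟨_, ⟨h1, h2, h3, h4⟩, _, h6⟩ := hx
  constructor
  · rw [Fin.strictMono_iff_lt_succ]
    intro i
    have := h4 i.castSucc (by simp)
    have e : (⟨(i.castSucc : ℕ) + 1, by simp⟩ : Fin (k + 1)) = i.succ := by ext; simp
    rw [e] at this
    have := h2 i.succ
    omega
  · intro i
    have := h1 i
    have := h2 i
    have := Finset.single_le_sum (f := fun i => a i + c i - 2 * d i)
      (fun _ _ => Nat.zero_le _) (Finset.mem_univ i)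
    omega

theorem tr_finsum {k : ℕ} (N r : ℕ) (a : Fin (k + 1) → ℕ) (haN : ∀ i, a i + r < N)
    {M : Type*} [AddCommGroup M] (G : (Fin (k + 1) → ℚ) → M) :
    ∑ᶠ lam ∈ {lam : Fin (k + 1) → ℚ | DominantB lam ∧ ∀ i, ∃ z : ℤ, lam i = z},
      (bPieri (trPsi a) lam r : ℤ) • G lam =
    ∑ c ∈ Fintype.piFinset (fun _ : Fin (k + 1) => Finset.range N),
      (bPieri (trPsi a) (trPsi c) r : ℤ) • G (trPsi c) := by
  classical
  have hinj : Function.Injective (trPsi (m := k + 1)) := by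
    intro c c' h
    funext i
    have := congrFun h i
    simp only [trPsi] at this
    have h3 : (c i : ℚ) = c' i := by linarith
    exact_mod_cast h3
  rw [finsum_mem_eq_sum_of_inter_support_eq (t := ((Fintype.piFinset
    (fun _ : Fin (k + 1) => Finset.range N)).filter StrictMono).image trPsi),
    Finset.sum_image (fun x _ y _ h => hinj h), Finset.sum_filter]
  · refine Finset.sum_congr rfl (fun c _ => ?_)
    split_ifs with hc
    · rfl
    · have : bPieri (trPsi a) (trPsi c) r = 0 := by
        by_contra h
        exact hc (tr_bPieri_ne a c r h).1
      simp [this]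
  · ext lam
    simp only [Set.mem_inter_iff, Set.mem_ofPred_eq, Function.mem_support, Finset.coe_image,
      Set.mem_image, Finset.mem_coe, Finset.mem_filter, Fintype.mem_piFinset, Finset.mem_range]
    refine and_congr_left (fun hs => ?_)
    have hb : bPieri (trPsi a) lam r ≠ 0 := by
      intro h
      apply hs
      simp [h]
    constructor
    · rintro ⟨⟨hm, h0, _⟩, hz⟩
      choose z hz using hz
      have hz0 : ∀ i, 0 ≤ z i := by
        intro i
        have := h0 i
        rw [hz i] at this
        exact_mod_cast this
      have hl : trPsi (fun i => (z i).toNat + (i : ℕ)) = lam := by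
        funext i
        rw [hz i]
        simp only [trPsi]
        have : ((z i).toNat : ℤ) = z i := Int.toNat_of_nonneg (hz0 i)
        have h3 : (((z i).toNat : ℤ) : ℚ) = z i := by rw [this]
        push_cast at h3 ⊢
        linarith
      rw [← hl] at hb
      obtain ⟨q1, q2⟩ := tr_bPieri_ne a _ r hb
      refine ⟨_, ⟨fun i => ?_, q1⟩, hl⟩
      have := q2 i
      have := haN i
      omega
    · rintro ⟨c, ⟨_, hc⟩, rfl⟩
      have hge : ∀ i : Fin (k + 1), (i : ℕ) ≤ c i := by
        intro i
        induction i using Fin.induction with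
        | zero => simp
        | succ i ih =>
          have : c i.castSucc < c i.succ := hc (by simp)
          simp at ih ⊢
          omega
      have hi : ∀ i, ∃ z : ℤ, trPsi c i = z := fun i => ⟨(c i : ℤ) - (i : ℕ), by simp [trPsi]⟩
      refine ⟨⟨?_, ?_, Or.inl hi⟩, hi⟩
      · rw [Fin.monotone_iff_le_succ]
        intro i
        have : c i.castSucc < c i.succ := hc (by simp)
        have h3 : ((c i.castSucc + 1 : ℕ) : ℚ) ≤ c i.succ := by exact_mod_cast this
        simp only [trPsi]
        push_cast at h3 ⊢
        simp only [Fin.val_castSucc, Fin.val_succ]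
        push_cast
        linarith
      · intro i
        have h3 : ((i : ℕ) : ℚ) ≤ c i := by exact_mod_cast hge i
        simp only [trPsi]
        linarith
open scoped BigOperators

theorem tr_final (k l : ℕ) (ν μ : Fin (k + 2) → ℤ)
    (hν : Monotone ν) (hν0 : ∀ i, 0 ≤ ν i)
    (hμ0 : ∀ i, 0 ≤ μ i)
    (h1 : ∀ i : Fin (k + 1), ν i.castSucc ≤ μ (Fin.last (k + 1)))
    (hl : ν (Fin.last (k + 1)) - μ (Fin.last (k + 1)) = l) :
    KB (k + 2) (fun i => (ν i : ℚ)) (fun i => (μ i : ℚ)) =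
      (PowerSeries.X : PowerSeries ℤ) ^ l *
        ∑ p ∈ Finset.range (l + 1) ×ˢ Finset.range (l + 1),
          if p.1 + 2 * p.2 = l then
            ∑ᶠ lam ∈ {lam : Fin (k + 1) → ℚ | DominantB lam ∧ ∀ i, ∃ z : ℤ, lam i = z},
              (bPieri (fun i : Fin (k + 1) => (ν i.castSucc : ℚ)) lam p.1 : ℤ) •
                KB (k + 1) lam (fun i : Fin (k + 1) => (μ i.castSucc : ℚ))
          else 0 := by
  classical
  rw [tr_KB_reduce ν μ l hν0 hμ0 h1 hl]
  congr 1
  set Φ : (Fin (k + 1) → ℚ) → PowerSeries ℤ := fun y => kostantQ (rootsB (k + 1))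
    (y - ((fun i : Fin (k + 1) => (μ i.castSucc : ℚ)) + rhoB (k + 1))) with hΦ
  obtain ⟨a, hadef⟩ : ∃ a : Fin (k + 1) → ℕ, ∀ i, (a i : ℤ) = ν i.castSucc + (i : ℕ) :=
    ⟨fun i => (ν i.castSucc).toNat + (i : ℕ), fun i => by
      have := hν0 i.castSucc
      push_cast
      rw [Int.toNat_of_nonneg this]⟩
  have hadefQ : ∀ i, (a i : ℚ) = ν i.castSucc + (i : ℕ) := fun i => by
    have := hadef i
    exact_mod_cast congrArg (fun z : ℤ => (z : ℚ)) this
  have ha : StrictMono a := by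
    intro i j hij
    have e1 := hadef i
    have e2 := hadef j
    have : ν i.castSucc ≤ ν j.castSucc := hν (by simpa using hij.le)
    have : (i : ℕ) < (j : ℕ) := hij
    omega
  have hpsi : (fun i : Fin (k + 1) => (ν i.castSucc : ℚ)) = trPsi a := by
    funext i
    simp only [trPsi, hadefQ]
    ring
  obtain ⟨N, haN⟩ : ∃ N, ∀ i, a i + l < N := ⟨∑ i, a i + l + 1, fun i => by
    have := Finset.single_le_sum (f := a) (fun _ _ => Nat.zero_le _) (Finset.mem_univ i)
    omega⟩
  set A : (Fin (k + 1) → ℤ) → PowerSeries ℤ := fun c => trAlt Φ (fun i => (c i : ℚ) + 1 / 2) with hAdef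
  have hA : ∀ (η : Fin (k + 1) → Bool) (c : Fin (k + 1) → ℤ),
      A (fun i => if η i then -1 - c i else c i) =
        (∏ i, (if η i then (-1 : PowerSeries ℤ) else 1)) * A c := by
    intro η c
    have := trAlt_flip Φ (fun i => (c i : ℚ) + 1 / 2) η
    have e : (fun i => (if η i = true then -1 else 1) * ((c i : ℚ) + 1 / 2)) =
        (fun i => (((if η i then -1 - c i else c i) : ℤ) : ℚ) + 1 / 2) := by
      funext i
      split_ifs
      · push_cast
        ring
      · ring
    rw [e] at this
    simp only [hAdef]
    rw [this, zsmul_eq_mul, Int.cast_prod]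
    congr 1
    refine Finset.prod_congr rfl (fun i _ => ?_)
    split_ifs <;> simp
  have hP : ∀ i j (c : Fin (k + 1) → ℤ), i ≠ j → A (c ∘ Equiv.swap i j) = - A c := by
    intro i j c hij
    have := trAlt_perm Φ (fun i => (c i : ℚ) + 1 / 2) (Equiv.swap i j)
    rw [Equiv.Perm.sign_swap hij] at this
    simp only [hAdef]
    simpa [Function.comp_def] using this
  have h2S : ∀ x : PowerSeries ℤ, x = -x → x = 0 := by
    intro x hx
    ext n
    have := congrArg (PowerSeries.coeff n) hx
    rw [map_neg] at this
    simp only [map_zero]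
    omega
  have hL : ∀ τ : Option (Fin (k + 1) × Bool) → ℕ,
      trAlt Φ (((fun i : Fin (k + 1) => (ν i.castSucc : ℚ)) + rhoB (k + 1)) +
        ∑ j, (τ j : ℚ) • trX (k + 1) j) =
      A (fun i => (a i : ℤ) + ((τ (some (i, true)) : ℤ) - τ (some (i, false)))) := by
    intro τ
    simp only [hAdef]
    congr 1
    funext i
    rw [Pi.add_apply, tr_theta]
    simp only [Pi.add_apply, rhoB]
    push_cast
    rw [hadefQ]
    ring
  simp only [hL]
  rw [tr_comb h2S N l a ha haN A hA hP]
  refine Finset.sum_congr rfl (fun p _ => ?_)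
  split_ifs with hp
  · rw [hpsi, tr_finsum N p.1 a (fun i => by have := haN i; omega)]
    refine Finset.sum_congr rfl (fun c _ => ?_)
    rw [tr_bPieri N a c (fun i => by have := haN i; omega)]
    congr 1
    simp only [hAdef, trAlt, KB, hΦ]
    have e : trPsi c + rhoB (k + 1) = fun i => (((c i : ℕ) : ℤ) : ℚ) + 1 / 2 := by
      funext i
      simp only [Pi.add_apply, trPsi, rhoB]
      push_cast
      ring
    rw [e]
  · rfl

/-- If `μ_n ≥ ν_{n-1}` and `l = ν_n - μ_n ≥ 0` then
`K^{B_n}_{ν,μ}(q) = q^l ∑_{r+2m=l} ∑_λ b^λ_{ν',r} K^{B_{n-1}}_{λ,μ'}(q)`. -/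
theorem KB_top_row_reduction (n : ℕ) (hn : 2 ≤ n) (ν μ : Fin n → ℤ)
    (hν : Monotone ν) (hν0 : ∀ i, 0 ≤ ν i)
    (hμ : Monotone μ) (hμ0 : ∀ i, 0 ≤ μ i)
    (h1 : ν ⟨n - 2, by omega⟩ ≤ μ ⟨n - 1, by omega⟩)
    (h2 : μ ⟨n - 1, by omega⟩ ≤ ν ⟨n - 1, by omega⟩) :
    KB n (fun i => (ν i : ℚ)) (fun i => (μ i : ℚ)) =
      (PowerSeries.X : PowerSeries ℤ) ^ (ν ⟨n - 1, by omega⟩ - μ ⟨n - 1, by omega⟩).toNat *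
        ∑ p ∈ Finset.range ((ν ⟨n - 1, by omega⟩ - μ ⟨n - 1, by omega⟩).toNat + 1) ×ˢ
              Finset.range ((ν ⟨n - 1, by omega⟩ - μ ⟨n - 1, by omega⟩).toNat + 1),
          if p.1 + 2 * p.2 = (ν ⟨n - 1, by omega⟩ - μ ⟨n - 1, by omega⟩).toNat then
            ∑ᶠ lam ∈ {lam : Fin (n - 1) → ℚ | DominantB lam ∧ ∀ i, ∃ z : ℤ, lam i = z},
              (bPieri (restrict1 fun i => (ν i : ℚ)) lam p.1 : ℤ) •
                KB (n - 1) lam (restrict1 fun i => (μ i : ℚ))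
          else 0 := by
  obtain ⟨k, rfl⟩ : ∃ k, n = k + 2 := ⟨n - 2, by omega⟩
  have hl : ν (Fin.last (k + 1)) - μ (Fin.last (k + 1)) =
      ((ν (Fin.last (k + 1)) - μ (Fin.last (k + 1))).toNat : ℕ) := by
    rw [Int.toNat_of_nonneg]
    exact sub_nonneg.2 h2
  exact tr_final k _ ν μ hν hν0 hμ0 (fun i => le_trans (hν (by
    rw [Fin.le_def]
    have := i.2
    simp
    omega)) h1) hl
end

section
/- Let n ≥ 2 and let ν = (ν_n,…,ν_1), μ = (μ_n,…,μ_1) ∈ ℤ^n with ν_n ≥ … ≥ ν_1 ≥ 0 and μ_n ≥ … ≥ μ_1 ≥ 0. Assume μ_n ≥ ν_{n−1} and ν_n − μ_n ≥ 0, and set l = ν_n − μ_n, ν' = (ν_{n−1},…,ν_1), μ' = (μ_{n−1},…,μ_1). Then K^{C_n}_{ν,μ}(q) = Σ_{(r,m) ∈ ℕ², r + 2m = l} q^{r+m} · Σ_λ c^λ_{ν',r} · K^{C_{n−1}}_{λ,μ'}(q), where the inner sum is over all dominant weights λ of type C_{n−1} (only finitely many terms are nonzero). -/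
open scoped BigOperators

open Classical in
theorem sum_filter_chain {α R : Type*} [AddCommGroup R]
    (hR : ∀ x : R, x = -x → x = 0) (T : Finset α) (F : α → R) (N : ℕ) (P : ℕ → α → Prop)
    (φ : ℕ → α → α)
    (h : ∀ i < N, ∀ t ∈ T, (∀ j < i, P j t) → ¬ P i t →
      φ i t ∈ T ∧ (∀ j < i, P j (φ i t)) ∧ ¬ P i (φ i t) ∧ φ i (φ i t) = t ∧ F (φ i t) = - F t) :
    ∑ t ∈ T, F t = ∑ t ∈ T.filter (fun t => ∀ j < N, P j t), F t := by
  induction N with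
  | zero => simp
  | succ N ih =>
    rw [ih (fun i hi => h i (by omega))]
    rw [← Finset.sum_filter_add_sum_filter_not (T.filter (fun t => ∀ j < N, P j t)) (P N)]
    have h0 : ∑ t ∈ (T.filter (fun t => ∀ j < N, P j t)).filter (fun t => ¬ P N t), F t = 0 := by
      apply hR
      rw [← Finset.sum_neg_distrib]
      have key : ∀ t ∈ (T.filter (fun t => ∀ j < N, P j t)).filter (fun t => ¬ P N t),
          φ N t ∈ (T.filter (fun t => ∀ j < N, P j t)).filter (fun t => ¬ P N t) ∧
          φ N (φ N t) = t ∧ F (φ N t) = - F t := by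
        intro t ht
        simp only [Finset.mem_filter] at ht ⊢
        obtain ⟨a, b, c, d, e⟩ := h N (by omega) t ht.1.1 ht.1.2 ht.2
        exact ⟨⟨⟨a, b⟩, c⟩, d, e⟩
      refine Finset.sum_nbij' (φ N) (φ N) (fun t ht => (key t ht).1) (fun t ht => (key t ht).1)
        (fun t ht => (key t ht).2.1) (fun t ht => (key t ht).2.1) (fun t ht => ?_)
      rw [(key t ht).2.2, neg_neg]
    rw [h0, add_zero, Finset.filter_filter]
    apply Finset.sum_congr _ (fun _ _ => rfl)
    ext t
    simp only [Finset.mem_filter]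
    constructor
    · rintro ⟨a, b, c⟩
      refine ⟨a, fun j hj => ?_⟩
      rcases Nat.lt_succ_iff_lt_or_eq.mp hj with h | h
      · exact b j h
      · exact h ▸ c
    · rintro ⟨a, b⟩
      exact ⟨a, fun j hj => b j (by omega), b N (by omega)⟩

/-- Pairs of tuples of naturals of total sum `r`. -/
def pairsOf (N r : ℕ) : Finset ((Fin N → ℕ) × (Fin N → ℕ)) :=
  (Fintype.piFinset (fun _ : Fin N => Finset.range (r + 1)) ×ˢ
    Fintype.piFinset (fun _ : Fin N => Finset.range (r + 1))).filter
      (fun t => ∑ i, (t.1 i + t.2 i) = r)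

theorem mem_pairsOf {N r : ℕ} (t : (Fin N → ℕ) × (Fin N → ℕ)) :
    t ∈ pairsOf N r ↔ ∑ i, (t.1 i + t.2 i) = r := by
  unfold pairsOf
  simp only [Finset.mem_filter, Finset.mem_product, Fintype.mem_piFinset, Finset.mem_range]
  constructor
  · exact fun h => h.2
  · intro h
    have h' : ∀ i, t.1 i + t.2 i ≤ r := fun i => by
      rw [← h]
      exact Finset.single_le_sum (f := fun i => t.1 i + t.2 i) (fun _ _ => Nat.zero_le _)
        (Finset.mem_univ i)
    exact ⟨⟨fun i => by have := h' i; omega, fun i => by have := h' i; omega⟩, h⟩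

theorem sum_two_change {N : ℕ} (f f' : Fin N → ℕ) (a b : Fin N) (hab : a ≠ b)
    (h : ∀ i, i ≠ a → i ≠ b → f' i = f i) (h2 : f' a + f' b = f a + f b) :
    ∑ i, f' i = ∑ i, f i := by
  rw [← Finset.sum_sdiff (Finset.subset_univ {a, b}),
    ← Finset.sum_sdiff (Finset.subset_univ {a, b}) (f := f), Finset.sum_pair hab,
    Finset.sum_pair hab, h2]
  congr 1
  apply Finset.sum_congr rfl
  intro i hi
  simp at hi
  exact h i (by tauto) (by tauto)

/-- The shifted weight `g + k̄ - k`. -/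
def shiftBy {N : ℕ} (g : Fin N → ℤ) (t : (Fin N → ℕ) × (Fin N → ℕ)) : Fin N → ℤ :=
  fun i => g i + (t.2 i : ℤ) - (t.1 i : ℤ)

open Classical in
theorem pieri_stage1 {R : Type*} [AddCommGroup R] (hR : ∀ x : R, x = -x → x = 0)
    {N : ℕ} (r : ℕ) (g : Fin N → ℤ) (hg0 : ∀ i, 0 < g i) (F : (Fin N → ℤ) → R)
    (hneg : ∀ x i, F (Function.update x i (- x i)) = - F x) :
    ∑ t ∈ pairsOf N r, F (shiftBy g t) =
      ∑ t ∈ (pairsOf N r).filter (fun t => ∀ i, (t.1 i : ℤ) < g i), F (shiftBy g t) := by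
  rw [sum_filter_chain hR (pairsOf N r) (fun t => F (shiftBy g t)) N
    (fun i t => ∀ h : i < N, (t.1 ⟨i, h⟩ : ℤ) < g ⟨i, h⟩)
    (fun i t => if h : i < N then
      (Function.update t.1 ⟨i, h⟩ (t.2 ⟨i, h⟩ + (g ⟨i, h⟩).toNat),
       Function.update t.2 ⟨i, h⟩ (t.1 ⟨i, h⟩ - (g ⟨i, h⟩).toNat)) else t)]
  · apply Finset.sum_congr _ (fun _ _ => rfl)
    ext t
    simp only [Finset.mem_filter]
    constructor
    · exact fun h => ⟨h.1, fun i => h.2 i i.2 i.2⟩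
    · exact fun h => ⟨h.1, fun j hj hj' => h.2 ⟨j, hj⟩⟩
  · intro i hi t ht hP hPi
    simp only [hi, dif_pos]
    simp only [hi, forall_true_left, not_lt] at hPi
    have hgi := hg0 ⟨i, hi⟩
    set a : Fin N := ⟨i, hi⟩ with ha
    rw [mem_pairsOf] at ht
    refine ⟨?_, ?_, ?_, ?_, ?_⟩
    · rw [mem_pairsOf, ← ht]
      apply Finset.sum_congr rfl
      intro l _
      by_cases hl : l = a
      · subst hl; simp; omega
      · simp [hl]
    · intro j hj hj'
      have : (⟨j, hj'⟩ : Fin N) ≠ a := by simp [ha, Fin.ext_iff]; omega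
      simp only [Function.update_of_ne this]
      exact hP j hj hj'
    · simp only [forall_true_left, ← ha, Function.update_self]; push_cast; omega
    · ext l
      · by_cases hl : l = a
        · subst hl; simp; omega
        · simp [hl]
      · by_cases hl : l = a
        · subst hl; simp
        · simp [hl]
    · rw [← hneg _ a]
      congr 1
      ext l
      by_cases hl : l = a
      · subst hl; simp [shiftBy]; omega
      · simp [hl, shiftBy]

theorem swap_eval {N : ℕ} {β : Type*} (x y : Fin N → β) (a b : Fin N)
    (h : ∀ i, i ≠ a → i ≠ b → y i = x i) (ha : y a = x b) (hb : y b = x a) :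
    y = x ∘ Equiv.swap a b := by
  ext i
  by_cases h1 : i = a
  · subst h1; simp [ha]
  · by_cases h2 : i = b
    · subst h2; simp [hb]
    · simp [Equiv.swap_apply_of_ne_of_ne h1 h2, h i h1 h2]

open Classical in
theorem pieri_stage2 {R : Type*} [AddCommGroup R] (hR : ∀ x : R, x = -x → x = 0)
    {N : ℕ} (T : Finset ((Fin N → ℕ) × (Fin N → ℕ))) (r : ℕ)
    (g : Fin N → ℤ) (hg : StrictMono g)
    (hT : ∀ t, t ∈ T ↔ (∑ i, (t.1 i + t.2 i) = r ∧ ∀ i, (t.1 i : ℤ) < g i))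
    (F : (Fin N → ℤ) → R)
    (hswap : ∀ x i j, i ≠ j → F (x ∘ Equiv.swap i j) = - F x) :
    ∑ t ∈ T, F (shiftBy g t) =
      ∑ t ∈ T.filter (fun t => ∀ i (h : i + 1 < N), g ⟨i, by omega⟩ + (t.1 ⟨i + 1, h⟩ : ℤ) <
        g ⟨i + 1, h⟩), F (shiftBy g t) := by
  rw [sum_filter_chain hR T (fun t => F (shiftBy g t)) (N - 1)
    (fun i t => ∀ j (h : j + 1 < N), j + i + 2 = N → g ⟨j, by omega⟩ + (t.1 ⟨j + 1, h⟩ : ℤ) <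
        g ⟨j + 1, h⟩)
    (fun i t => if h : i + 2 ≤ N then
      (Function.update (Function.update t.1 ⟨N - 2 - i, by omega⟩
        (g ⟨N - 2 - i, by omega⟩ + t.1 ⟨N - 2 - i + 1, by omega⟩ -
          g ⟨N - 2 - i + 1, by omega⟩).toNat)
          ⟨N - 2 - i + 1, by omega⟩
        (g ⟨N - 2 - i + 1, by omega⟩ + t.1 ⟨N - 2 - i, by omega⟩ -
          g ⟨N - 2 - i, by omega⟩).toNat,
       Function.update (Function.update t.2 ⟨N - 2 - i, by omega⟩ (t.2 ⟨N - 2 - i + 1, by omega⟩))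
          ⟨N - 2 - i + 1, by omega⟩ (t.2 ⟨N - 2 - i, by omega⟩))
      else t)]
  · apply Finset.sum_congr _ (fun _ _ => rfl)
    ext t
    simp only [Finset.mem_filter]
    constructor
    · exact fun h => ⟨h.1, fun i hi => h.2 (N - 2 - i) (by omega) i hi (by omega)⟩
    · exact fun h => ⟨h.1, fun j hj i hi _ => h.2 i hi⟩
  · intro i hi t ht hP hPi
    have hi2 : i + 2 ≤ N := by omega
    simp only [hi2, dif_pos]
    push Not at hPi
    obtain ⟨j, hj, hji, hv⟩ := hPi
    obtain rfl : j = N - 2 - i := by omega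
    have hlt : g ⟨N - 2 - i, by omega⟩ < g ⟨N - 2 - i + 1, by omega⟩ := hg (by simp [Fin.lt_def])
    generalize ha : (⟨N - 2 - i, by omega⟩ : Fin N) = a at hv hlt ⊢
    generalize hb : (⟨N - 2 - i + 1, by omega⟩ : Fin N) = b at hv hlt ⊢
    have hav : (a : ℕ) = N - 2 - i := by rw [← ha]
    have hbv : (b : ℕ) = N - 2 - i + 1 := by rw [← hb]
    have hab : a ≠ b := by intro h; rw [h] at hav; omega
    rw [hT] at ht
    have ta := ht.2 a
    have tb := ht.2 b
    refine ⟨?_, ?_, ?_, ?_, ?_⟩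
    · rw [hT]
      constructor
      · rw [← ht.1]
        apply sum_two_change _ _ a b hab
        · intro l h1 h2; simp [h1, h2]
        · simp [hab]; omega
      · intro l
        by_cases h1 : l = b
        · subst h1; simp; omega
        · by_cases h2 : l = a
          · subst h2; simp [hab]; omega
          · simp [h1, h2]; exact ht.2 l
    · intro j hj l hl hlj
      have h1 : (⟨l + 1, hl⟩ : Fin N) ≠ a := by intro h; rw [← h] at hav; simp at hav; omega
      have h2 : (⟨l + 1, hl⟩ : Fin N) ≠ b := by intro h; rw [← h] at hbv; simp at hbv; omega
      simp only [Function.update_of_ne h1, Function.update_of_ne h2]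
      exact hP j hj l hl hlj
    · push Not
      refine ⟨N - 2 - i, hj, hji, ?_⟩
      simp only [ha, hb]
      simp; omega
    · ext l
      · by_cases h1 : l = b
        · subst h1; simp [hab]; omega
        · by_cases h2 : l = a
          · subst h2; simp [hab]; omega
          · simp [h1, h2]
      · by_cases h1 : l = b
        · subst h1; simp [hab]
        · by_cases h2 : l = a
          · subst h2; simp [hab]
          · simp [h1, h2]
    · rw [← hswap _ a b hab]
      congr 1
      apply swap_eval
      · intro l h1 h2; simp [shiftBy, h1, h2]
      · simp [shiftBy, hab]; omega
      · simp [shiftBy, hab]; omega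

open Classical in
theorem pieri_stage3 {R : Type*} [AddCommGroup R] (hR : ∀ x : R, x = -x → x = 0)
    {N : ℕ} (T : Finset ((Fin N → ℕ) × (Fin N → ℕ))) (r : ℕ)
    (g : Fin N → ℤ) (hg : StrictMono g) (Q : (Fin N → ℕ) → Prop)
    (hQ : ∀ k, Q k → ∀ i (h : i + 1 < N), g ⟨i, by omega⟩ + (k ⟨i + 1, h⟩ : ℤ) < g ⟨i + 1, h⟩)
    (hT : ∀ t, t ∈ T ↔ (∑ i, (t.1 i + t.2 i) = r ∧ Q t.1))
    (F : (Fin N → ℤ) → R)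
    (hswap : ∀ x i j, i ≠ j → F (x ∘ Equiv.swap i j) = - F x) :
    ∑ t ∈ T, F (shiftBy g t) =
      ∑ t ∈ T.filter (fun t => ∀ i (h : i + 1 < N), shiftBy g t ⟨i, by omega⟩ <
        g ⟨i + 1, h⟩ - (t.1 ⟨i + 1, h⟩ : ℤ)), F (shiftBy g t) := by
  rw [sum_filter_chain hR T (fun t => F (shiftBy g t)) (N - 1)
    (fun i t => ∀ (h : i + 1 < N), shiftBy g t ⟨i, by omega⟩ <
        g ⟨i + 1, h⟩ - (t.1 ⟨i + 1, h⟩ : ℤ))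
    (fun i t => if h : i + 1 < N then
      (t.1, Function.update (Function.update t.2 ⟨i, by omega⟩
        (shiftBy g t ⟨i + 1, h⟩ - (g ⟨i, by omega⟩ - t.1 ⟨i, by omega⟩)).toNat)
          ⟨i + 1, h⟩
        (shiftBy g t ⟨i, by omega⟩ - (g ⟨i + 1, h⟩ - t.1 ⟨i + 1, h⟩)).toNat)
      else t)]
  · apply Finset.sum_congr _ (fun _ _ => rfl)
    ext t
    simp only [Finset.mem_filter]
    constructor
    · exact fun h => ⟨h.1, fun i hi => h.2 i (by omega) hi⟩
    · exact fun h => ⟨h.1, fun j hj hi => h.2 j hi⟩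
  · intro i hi t ht hP hPi
    have hi2 : i + 1 < N := Nat.add_lt_of_lt_sub hi
    simp only [hi2, dif_pos]
    simp only [hi2, forall_true_left, not_lt] at hPi
    rw [hT] at ht
    have hlt := hQ _ ht.2 i hi2
    generalize ha : (⟨i, by omega⟩ : Fin N) = a at hPi hlt ⊢
    generalize hb : (⟨i + 1, by omega⟩ : Fin N) = b at hPi hlt ⊢
    have hav : (a : ℕ) = i := by rw [← ha]
    have hbv : (b : ℕ) = i + 1 := by rw [← hb]
    have hab : a ≠ b := by intro h; rw [h] at hav; omega
    simp only [shiftBy] at hPi hP ⊢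
    refine ⟨?_, ?_, ?_, ?_, ?_⟩
    · rw [hT]
      refine ⟨?_, ht.2⟩
      rw [← ht.1]
      apply sum_two_change _ _ a b hab
      · intro l h1 h2; simp [h1, h2]
      · simp [hab]; omega
    · intro j hj hl
      have h1 : (⟨j, by omega⟩ : Fin N) ≠ a := by intro h; rw [← h] at hav; simp at hav; omega
      have h2 : (⟨j, by omega⟩ : Fin N) ≠ b := by intro h; rw [← h] at hbv; simp at hbv; omega
      simp only [Function.update_of_ne h1, Function.update_of_ne h2]
      exact hP j hj hl
    · intro h
      have h := h trivial
      rw [ha, hb] at h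
      simp [hab] at h
      omega
    · ext l
      · rfl
      · by_cases h1 : l = b
        · subst h1; simp [hab]; omega
        · by_cases h2 : l = a
          · subst h2; simp [hab]; omega
          · simp [h1, h2]
    · rw [← hswap _ a b hab]
      congr 1
      apply swap_eval
      · intro l h1 h2; simp [shiftBy, h1, h2]
      · simp [shiftBy, hab]; omega
      · simp [shiftBy]; omega

/-- The interlacing conditions, in shifted coordinates. -/
def PieriCond {N : ℕ} (g : Fin N → ℤ) (t : (Fin N → ℕ) × (Fin N → ℕ)) : Prop :=
  (∀ i, (t.1 i : ℤ) < g i) ∧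
  (∀ i (h : i + 1 < N), g ⟨i, by omega⟩ + (t.1 ⟨i + 1, h⟩ : ℤ) < g ⟨i + 1, h⟩) ∧
  (∀ i (h : i + 1 < N), shiftBy g t ⟨i, by omega⟩ < g ⟨i + 1, h⟩ - (t.1 ⟨i + 1, h⟩ : ℤ))

open Classical in
theorem pieri_sum {R : Type*} [AddCommGroup R] (hR : ∀ x : R, x = -x → x = 0)
    {N : ℕ} (r : ℕ) (g : Fin N → ℤ) (hg : StrictMono g) (hg0 : ∀ i, 0 < g i)
    (F : (Fin N → ℤ) → R)
    (hneg : ∀ x i, F (Function.update x i (- x i)) = - F x)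
    (hswap : ∀ x i j, i ≠ j → F (x ∘ Equiv.swap i j) = - F x) :
    ∑ t ∈ pairsOf N r, F (shiftBy g t) =
      ∑ t ∈ (pairsOf N r).filter (PieriCond g), F (shiftBy g t) := by
  rw [pieri_stage1 hR r g hg0 F hneg,
    pieri_stage2 hR _ r g hg (by intro t; simp [mem_pairsOf]) F hswap,
    pieri_stage3 hR _ r g hg (fun k => (∀ i, (k i : ℤ) < g i) ∧ 
      ∀ i (h : i + 1 < N), g ⟨i, by omega⟩ + (k ⟨i + 1, h⟩ : ℤ) < g ⟨i + 1, h⟩)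
      (fun k h => h.2) (by intro t; simp [mem_pairsOf, and_assoc]) F hswap]
  apply Finset.sum_congr _ (fun _ _ => rfl)
  ext t
  simp only [Finset.mem_filter, PieriCond, and_assoc]

/-- Append a last coordinate. -/
def snocQ {N : ℕ} (x : Fin N → ℚ) (c : ℚ) : Fin (N + 1) → ℚ := Fin.snoc (α := fun _ => ℚ) x c

@[simp] theorem snocQ_castSucc {N : ℕ} (x : Fin N → ℚ) (c : ℚ) (i : Fin N) :
    snocQ x c i.castSucc = x i := by simp [snocQ]

@[simp] theorem snocQ_last {N : ℕ} (x : Fin N → ℚ) (c : ℚ) :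
    snocQ x c (Fin.last N) = c := by simp [snocQ]

theorem snocQ_ext {N : ℕ} {f g : Fin (N + 1) → ℚ} (h : ∀ i : Fin N, f i.castSucc = g i.castSucc)
    (h' : f (Fin.last N) = g (Fin.last N)) : f = g := by
  funext i
  refine Fin.lastCases h' h i

theorem snocQ_inj {N : ℕ} {x y : Fin N → ℚ} {c d : ℚ} (h : snocQ x c = snocQ y d) :
    x = y ∧ c = d := by
  constructor
  · funext i
    simpa using congrFun h i.castSucc
  · simpa using congrFun h (Fin.last N)

theorem single_castSucc_eq {N : ℕ} (i : Fin N) (c : ℚ) :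
    (Pi.single i.castSucc c : Fin (N + 1) → ℚ) = snocQ (Pi.single i c) 0 := by
  apply snocQ_ext
  · intro j; simp [Pi.single_apply]
  · simp [Pi.single_apply, Fin.ext_iff]; omega

theorem single_last_eq {N : ℕ} (c : ℚ) :
    (Pi.single (Fin.last N) c : Fin (N + 1) → ℚ) = snocQ 0 c := by
  apply snocQ_ext
  · intro j; simp [Pi.single_apply, Fin.ext_iff]; omega
  · simp

theorem snocQ_add {N : ℕ} (x y : Fin N → ℚ) (c d : ℚ) :
    snocQ x c + snocQ y d = snocQ (x + y) (c + d) := by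
  apply snocQ_ext <;> simp

theorem snocQ_sub {N : ℕ} (x y : Fin N → ℚ) (c d : ℚ) :
    snocQ x c - snocQ y d = snocQ (x - y) (c - d) := by
  apply snocQ_ext <;> simp

theorem mem_rootsC {n : ℕ} (α : Fin n → ℚ) : α ∈ rootsC n ↔
    (∃ i j : Fin n, j < i ∧ α = Pi.single i (1 : ℚ) - Pi.single j 1) ∨
    (∃ i j : Fin n, j < i ∧ α = Pi.single i (1 : ℚ) + Pi.single j 1) ∨
    ∃ i : Fin n, α = Pi.single i (2 : ℚ) := by
  simp only [rootsC, rootsD, Finset.mem_union, Finset.mem_image, Finset.mem_filter,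
    Finset.mem_univ, true_and, Prod.exists, or_assoc]
  refine or_congr ?_ (or_congr ?_ ?_)
  · simp only [eq_comm]
  · simp only [eq_comm]
  · simp only [eq_comm]

/-- Index type of the roots of `C_{N+1}`, split along the last coordinate. -/
abbrev RootIdx (N : ℕ) := {α // α ∈ rootsC N} ⊕ ((Fin N ⊕ Fin N) ⊕ Unit)

/-- The roots of `C_{N+1}`. -/
def rootVec (N : ℕ) : RootIdx N → (Fin (N + 1) → ℚ) :=
  Sum.elim (fun α => snocQ α.1 0)
    (Sum.elim (Sum.elim (fun i => snocQ (- Pi.single i 1) 1) (fun i => snocQ (Pi.single i 1) 1))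
      (fun _ => snocQ 0 2))

theorem rootVec_mem {N : ℕ} (s : RootIdx N) : rootVec N s ∈ rootsC (N + 1) := by
  rw [mem_rootsC]
  rcases s with ⟨α, hα⟩ | (i | i) | u
  · rw [mem_rootsC] at hα
    rcases hα with ⟨i, j, h, rfl⟩ | ⟨i, j, h, rfl⟩ | ⟨i, rfl⟩
    · left
      exact ⟨i.castSucc, j.castSucc, by simpa using h, by
        simp [rootVec, single_castSucc_eq, snocQ_sub]⟩
    · right; left
      exact ⟨i.castSucc, j.castSucc, by simpa using h, by
        simp [rootVec, single_castSucc_eq, snocQ_add]⟩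
    · right; right
      exact ⟨i.castSucc, by simp [rootVec, single_castSucc_eq]⟩
  · left
    exact ⟨Fin.last N, i.castSucc, Fin.castSucc_lt_last i, by
      simp [rootVec, single_castSucc_eq, single_last_eq, snocQ_sub]⟩
  · right; left
    exact ⟨Fin.last N, i.castSucc, Fin.castSucc_lt_last i, by
      simp [rootVec, single_castSucc_eq, single_last_eq, snocQ_add]⟩
  · right; right
    exact ⟨Fin.last N, by simp [rootVec, single_last_eq]⟩

theorem rootVec_surj {N : ℕ} (α : Fin (N + 1) → ℚ) (h : α ∈ rootsC (N + 1)) :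
    ∃ s, rootVec N s = α := by
  rw [mem_rootsC] at h
  rcases h with ⟨i, j, h, rfl⟩ | ⟨i, j, h, rfl⟩ | ⟨i, rfl⟩
  · induction i using Fin.lastCases with
    | last =>
      induction j using Fin.lastCases with
      | last => exact absurd h (lt_irrefl _)
      | cast j =>
        exact ⟨Sum.inr (Sum.inl (Sum.inl j)), by
          simp [rootVec, single_castSucc_eq, single_last_eq, snocQ_sub]⟩
    | cast i =>
      induction j using Fin.lastCases with
      | last => exact absurd h (by simp [Fin.le_last])
      | cast j =>
        exact ⟨Sum.inl ⟨Pi.single i 1 - Pi.single j 1, by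
          rw [mem_rootsC]; left; exact ⟨i, j, by simpa using h, rfl⟩⟩, by
          simp [rootVec, single_castSucc_eq, snocQ_sub]⟩
  · induction i using Fin.lastCases with
    | last =>
      induction j using Fin.lastCases with
      | last => exact absurd h (lt_irrefl _)
      | cast j =>
        exact ⟨Sum.inr (Sum.inl (Sum.inr j)), by
          simp [rootVec, single_castSucc_eq, single_last_eq, snocQ_add]⟩
    | cast i =>
      induction j using Fin.lastCases with
      | last => exact absurd h (by simp [Fin.le_last])
      | cast j =>
        exact ⟨Sum.inl ⟨Pi.single i 1 + Pi.single j 1, by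
          rw [mem_rootsC]; right; left; exact ⟨i, j, by simpa using h, rfl⟩⟩, by
          simp [rootVec, single_castSucc_eq, snocQ_add]⟩
  · induction i using Fin.lastCases with
    | last => exact ⟨Sum.inr (Sum.inr ()), by simp [rootVec, single_last_eq]⟩
    | cast i =>
      exact ⟨Sum.inl ⟨Pi.single i 2, by
          rw [mem_rootsC]; right; right; exact ⟨i, rfl⟩⟩, by
          simp [rootVec, single_castSucc_eq]⟩

theorem rootVec_inj (N : ℕ) : Function.Injective (rootVec N) := by
  have hne : ∀ i j : Fin N, (- Pi.single i (1 : ℚ) : Fin N → ℚ) ≠ Pi.single j 1 := by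
    intro i j h
    have := congrFun h j
    simp [Pi.single_apply] at this
    split_ifs at this <;> norm_num at this
  have hs : ∀ i j : Fin N, (Pi.single i (1 : ℚ) : Fin N → ℚ) = Pi.single j 1 → i = j := by
    intro i j h
    have := congrFun h i
    simp [Pi.single_apply] at this
    exact this
  rintro (⟨α, hα⟩ | (i | i) | u) (⟨α', hα'⟩ | (i' | i') | u') h
  all_goals first | rfl | skip
  all_goals simp only [rootVec, Sum.elim_inl, Sum.elim_inr] at h
  all_goals have h1 := (snocQ_inj h).1
  all_goals have h2 := (snocQ_inj h).2
  all_goals first | (norm_num at h2; done) | skip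
  · subst h1; rfl
  · rw [hs _ _ (neg_injective h1)]
  · exact absurd h1 (hne _ _)
  · exact absurd h1.symm (hne _ _)
  · rw [hs _ _ h1]

/-- The roots of `C_{N+1}` are indexed by `RootIdx N`. -/
noncomputable def rootEquiv (N : ℕ) : RootIdx N ≃ {α // α ∈ rootsC (N + 1)} :=
  Equiv.ofBijective (fun s => ⟨rootVec N s, rootVec_mem s⟩)
    ⟨fun a b h => rootVec_inj N (congrArg Subtype.val h), fun α => by
      obtain ⟨s, hs⟩ := rootVec_surj α.1 α.2
      exact ⟨s, Subtype.ext hs⟩⟩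

theorem kostant_coeff_idx (N : ℕ) (β : Fin (N + 1) → ℚ) (k : ℕ) :
    PowerSeries.coeff k (kostantQ (rootsC (N + 1)) β) =
      (Nat.card {m : RootIdx N → ℕ //
        (∑ s, m s) = k ∧ (∑ s, (m s : ℚ) • rootVec N s) = β} : ℤ) := by
  rw [kostantQ, PowerSeries.coeff_mk]
  congr 1
  symm
  apply Nat.card_congr
  refine Equiv.subtypeEquiv (Equiv.arrowCongr (rootEquiv N) (Equiv.refl ℕ)) ?_
  intro m
  have e1 : ∑ α, (Equiv.arrowCongr (rootEquiv N) (Equiv.refl ℕ)) m α = ∑ s, m s := by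
    rw [← Equiv.sum_comp (rootEquiv N)]
    simp [Equiv.arrowCongr]
  have e2 : ∑ α, ((Equiv.arrowCongr (rootEquiv N) (Equiv.refl ℕ)) m α : ℚ) • (α : Fin (N + 1) → ℚ)
      = ∑ s, (m s : ℚ) • rootVec N s := by
    rw [← Equiv.sum_comp (rootEquiv N)]
    apply Finset.sum_congr rfl
    intro s _
    simp only [Equiv.arrowCongr, Equiv.coe_fn_mk, Function.comp_apply, Equiv.symm_apply_apply,
      Equiv.refl_apply]
    rfl
  rw [e1, e2]

theorem kostant_eq_zero (N : ℕ) (β : Fin (N + 1) → ℚ) (h : β (Fin.last N) < 0) :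
    kostantQ (rootsC (N + 1)) β = 0 := by
  ext k
  rw [kostant_coeff_idx]
  have : IsEmpty {m : RootIdx N → ℕ //
        (∑ s, m s) = k ∧ (∑ s, (m s : ℚ) • rootVec N s) = β} := by
    constructor
    rintro ⟨m, -, hm⟩
    have h2 := congrFun hm (Fin.last N)
    rw [← h2, Finset.sum_apply] at h
    apply absurd h
    rw [not_lt]
    apply Finset.sum_nonneg
    rintro (s | (s | s) | s) _ <;> simp [rootVec]
  rw [Nat.card_eq_zero.mpr (Or.inl this)]
  simp

/-- Index set for the multiplicities of the roots involving the last coordinate. -/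
def topIdx (N l : ℕ) : Finset ((_ : ℕ × ℕ) × ((Fin N → ℕ) × (Fin N → ℕ))) :=
  ((Finset.range (l + 1) ×ˢ Finset.range (l + 1)).filter (fun p => p.1 + 2 * p.2 = l)).sigma
    (fun p => pairsOf N p.1)

theorem mem_topIdx {N l : ℕ} (x : (_ : ℕ × ℕ) × ((Fin N → ℕ) × (Fin N → ℕ))) :
    x ∈ topIdx N l ↔ x.1.1 + 2 * x.1.2 = l ∧ ∑ i, (x.2.1 i + x.2.2 i) = x.1.1 := by
  simp only [topIdx, Finset.mem_sigma, Finset.mem_filter, Finset.mem_product, Finset.mem_range,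
    mem_pairsOf]
  constructor
  · exact fun h => ⟨h.1.2, h.2⟩
  · exact fun h => ⟨⟨⟨by omega, by omega⟩, h.1⟩, h.2⟩

theorem sum_rootVec (N : ℕ) (m : {α // α ∈ rootsC N} → ℕ) (k kb : Fin N → ℕ) (m0 : ℕ) :
    (∑ s, ((Sum.elim m (Sum.elim (Sum.elim k kb) (fun _ : Unit => m0)) s : ℕ) : ℚ) • rootVec N s) =
      snocQ (fun i => (∑ α, (m α : ℚ) • (α : Fin N → ℚ)) i - k i + kb i)
        ((∑ i, (k i + kb i) : ℕ) + 2 * m0) := by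
  apply snocQ_ext
  · intro i
    simp [Finset.sum_apply, rootVec, Fintype.sum_sum_type, Pi.single_apply]
    ring
  · simp [Finset.sum_apply, rootVec, Fintype.sum_sum_type, Finset.sum_add_distrib]
    ring

theorem finite_fiber {ι : Type*} [Fintype ι] (c k : ℕ) (P : (ι → ℕ) → Prop) :
    Finite {m : ι → ℕ // (∑ i, m i) + c = k ∧ P m} := by
  classical
  apply Set.Finite.to_subtype (s := {m : ι → ℕ | (∑ i, m i) + c = k ∧ P m})
  apply Set.Finite.subset (Set.finite_Icc (0 : ι → ℕ) (fun _ => k))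
  rintro m ⟨h, -⟩
  refine ⟨fun i => Nat.zero_le _, fun i => ?_⟩
  have := Finset.single_le_sum (f := m) (fun _ _ => Nat.zero_le _) (Finset.mem_univ i)
  simp only; omega

theorem kostant_step (N l : ℕ) (β : Fin N → ℚ) :
    kostantQ (rootsC (N + 1)) (snocQ β l) =
      ∑ x ∈ topIdx N l, (PowerSeries.X : PowerSeries ℤ) ^ (x.1.1 + x.1.2) *
        kostantQ (rootsC N) (fun i => β i + x.2.1 i - x.2.2 i) := by
  ext k
  rw [kostant_coeff_idx, map_sum]
  have hterm : ∀ x ∈ topIdx N l, PowerSeries.coeff k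
      ((PowerSeries.X : PowerSeries ℤ) ^ (x.1.1 + x.1.2) *
        kostantQ (rootsC N) (fun i => β i + x.2.1 i - x.2.2 i)) =
      ((Nat.card {m : {α // α ∈ rootsC N} → ℕ // (∑ α, m α) + (x.1.1 + x.1.2) = k ∧
        (∑ α, (m α : ℚ) • (α : Fin N → ℚ)) = fun i => β i + x.2.1 i - x.2.2 i} : ℕ) : ℤ) := by
    intro x _
    rw [PowerSeries.coeff_X_pow_mul']
    split_ifs with hk
    · rw [kostantQ, PowerSeries.coeff_mk]
      congr 1
      apply Nat.card_congr
      apply Equiv.subtypeEquivRight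
      intro m
      constructor
      · exact fun h => ⟨by omega, h.2⟩
      · exact fun h => ⟨by omega, h.2⟩
    · symm
      rw [Nat.cast_eq_zero, Nat.card_eq_zero]
      left
      constructor
      rintro ⟨m, h, -⟩
      omega
  rw [Finset.sum_congr rfl hterm, ← Nat.cast_sum]
  congr 1
  rw [← Finset.sum_coe_sort]
  have : ∀ x : topIdx N l, Finite {m : {α // α ∈ rootsC N} → ℕ //
      (∑ α, m α) + (x.1.1.1 + x.1.1.2) = k ∧
        (∑ α, (m α : ℚ) • (α : Fin N → ℚ)) = fun i => β i + x.1.2.1 i - x.1.2.2 i} :=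
    fun x => finite_fiber _ _ _
  rw [← Nat.card_sigma (α := topIdx N l)]
  symm
  refine Nat.card_congr (Equiv.ofBijective (fun y => ⟨Sum.elim y.2.1
    (Sum.elim (Sum.elim y.1.1.2.1 y.1.1.2.2) (fun _ : Unit => y.1.1.1.2)), ?_⟩) ⟨?_, ?_⟩)
  · obtain ⟨⟨⟨⟨r, m0⟩, k1, kb⟩, hx⟩, m, hm1, hm2⟩ := y
    rw [mem_topIdx] at hx
    simp only at hx hm1 hm2 ⊢
    constructor
    · rw [Fintype.sum_sum_type, Fintype.sum_sum_type, Fintype.sum_sum_type]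
      simp only [Sum.elim_inl, Sum.elim_inr, Finset.univ_unique, Finset.sum_singleton]
      rw [← Finset.sum_add_distrib]
      omega
    · rw [sum_rootVec, hm2, hx.2, ← hx.1]
      congr 1
      · funext i; ring
      · push_cast; ring
  · rintro ⟨⟨⟨⟨r, m0⟩, k1, kb⟩, hx⟩, m, hm1, hm2⟩ ⟨⟨⟨⟨r', m0'⟩, k1', kb'⟩, hx'⟩, m', hm1', hm2'⟩ h
    have h := congrArg Subtype.val h
    simp only at h
    obtain rfl : m = m' := by
      funext i; simpa using congrFun h (Sum.inl i)
    obtain rfl : k1 = k1' := by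
      funext i; simpa using congrFun h (Sum.inr (Sum.inl (Sum.inl i)))
    obtain rfl : kb = kb' := by
      funext i; simpa using congrFun h (Sum.inr (Sum.inl (Sum.inr i)))
    obtain rfl : m0 = m0' := by
      simpa using congrFun h (Sum.inr (Sum.inr ()))
    obtain rfl : r = r' := by
      rw [mem_topIdx] at hx hx'
      exact hx.2.symm.trans hx'.2
    rfl
  · rintro ⟨m, hm1, hm2⟩
    obtain ⟨m1, k1, kb, m0, rfl⟩ : ∃ m1 k1 kb m0,
        m = Sum.elim m1 (Sum.elim (Sum.elim k1 kb) (fun _ : Unit => m0)) := by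
      refine ⟨fun i => m (Sum.inl i), fun i => m (Sum.inr (Sum.inl (Sum.inl i))),
        fun i => m (Sum.inr (Sum.inl (Sum.inr i))), m (Sum.inr (Sum.inr ())), ?_⟩
      funext s
      rcases s with s | (s | s) | s <;> rfl
    have hm2' := hm2
    rw [sum_rootVec] at hm2'
    obtain ⟨e1, e2⟩ := snocQ_inj hm2'
    refine ⟨⟨⟨⟨(∑ i, (k1 i + kb i), m0), (k1, kb)⟩, ?_⟩, ⟨m1, ?_, ?_⟩⟩, rfl⟩
    · rw [mem_topIdx]
      refine ⟨?_, rfl⟩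
      exact_mod_cast e2
    · rw [← hm1]
      simp only [Fintype.sum_sum_type, Sum.elim_inl, Sum.elim_inr, Finset.univ_unique,
        Finset.sum_singleton, Finset.sum_add_distrib]
    · funext i
      have := congrFun e1 i
      simp only at this ⊢
      linarith

/-- The alternating sum defining `KC`, in shifted coordinates. -/
noncomputable def altF {N : ℕ} (M x : Fin N → ℚ) : PowerSeries ℤ :=
  ∑ σ : Equiv.Perm (Fin N), ∑ ε : Fin N → Bool,
    wDet σ ε • kostantQ (rootsC N) (wAct σ ε x - M)

theorem altF_swap {N : ℕ} (M x : Fin N → ℚ) (i j : Fin N) (hij : i ≠ j) :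
    altF M (x ∘ Equiv.swap i j) = - altF M x := by
  unfold altF
  rw [← Finset.sum_neg_distrib]
  refine Fintype.sum_equiv (Equiv.mulRight (Equiv.swap i j)) _ _ ?_
  intro σ
  rw [← Finset.sum_neg_distrib]
  apply Finset.sum_congr rfl
  intro ε _
  have h1 : wDet (Equiv.mulRight (Equiv.swap i j) σ) ε = - wDet σ ε := by
    simp [wDet, Equiv.Perm.sign_swap hij]
  have h2 : wAct (Equiv.mulRight (Equiv.swap i j) σ) ε x = wAct σ ε (x ∘ Equiv.swap i j) := by
    funext l
    simp [wAct]
  rw [h1, h2, neg_smul, neg_neg]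

theorem altF_neg {N : ℕ} (M x : Fin N → ℚ) (j : Fin N) :
    altF M (Function.update x j (- x j)) = - altF M x := by
  unfold altF
  rw [← Finset.sum_neg_distrib]
  apply Finset.sum_congr rfl
  intro σ _
  rw [← Finset.sum_neg_distrib]
  have hinv : Function.Involutive
      (fun ε : Fin N → Bool => Function.update ε (σ j) (! ε (σ j))) := by
    intro ε
    funext l
    by_cases h : l = σ j
    · subst h; simp
    · simp [h]
  refine Fintype.sum_equiv hinv.toPerm _ _ ?_
  intro ε
  have h1 : wDet σ (Function.update ε (σ j) (! ε (σ j))) = - wDet σ ε := by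
    unfold wDet
    rw [← Finset.mul_prod_erase _ _ (Finset.mem_univ (σ j)),
      ← Finset.mul_prod_erase (a := σ j) _ (fun i => if ε i = true then (-1 : ℤ) else 1)
        (Finset.mem_univ (σ j))]
    have : ∏ l ∈ Finset.univ.erase (σ j),
        (if Function.update ε (σ j) (! ε (σ j)) l = true then (-1 : ℤ) else 1) =
        ∏ l ∈ Finset.univ.erase (σ j), (if ε l = true then (-1 : ℤ) else 1) := by
      apply Finset.prod_congr rfl
      intro l hl
      rw [Function.update_of_ne (Finset.ne_of_mem_erase hl)]
    rw [this]
    cases h : ε (σ j) <;> simp [h]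
  have h2 : wAct σ (Function.update ε (σ j) (! ε (σ j))) x =
      wAct σ ε (Function.update x j (- x j)) := by
    funext l
    by_cases h : l = σ j
    · subst h
      cases h : ε (σ j) <;> simp [wAct, h]
    · have h' : σ⁻¹ l ≠ j := by
        intro h''; apply h; rw [← h'']; simp
      simp only [wAct, Function.update_of_ne h, Function.update_of_ne h']
  change _ = -(wDet σ (Function.update ε (σ j) (! ε (σ j))) • kostantQ (rootsC N)
    (wAct σ (Function.update ε (σ j) (! ε (σ j))) x - M))
  rw [h1, h2, neg_smul, neg_neg]

/-- A signed permutation acting on pairs of tuples. -/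
def pairAct {N : ℕ} (σ : Equiv.Perm (Fin N)) (ε : Fin N → Bool)
    (t : (Fin N → ℕ) × (Fin N → ℕ)) : (Fin N → ℕ) × (Fin N → ℕ) :=
  (fun i => if ε i then t.1 (σ⁻¹ i) else t.2 (σ⁻¹ i),
   fun i => if ε i then t.2 (σ⁻¹ i) else t.1 (σ⁻¹ i))

/-- The inverse action. -/
def pairActInv {N : ℕ} (σ : Equiv.Perm (Fin N)) (ε : Fin N → Bool)
    (t : (Fin N → ℕ) × (Fin N → ℕ)) : (Fin N → ℕ) × (Fin N → ℕ) :=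
  (fun i => if ε (σ i) then t.1 (σ i) else t.2 (σ i),
   fun i => if ε (σ i) then t.2 (σ i) else t.1 (σ i))

theorem sum_pairs_wAct {N : ℕ} (r : ℕ) (σ : Equiv.Perm (Fin N)) (ε : Fin N → Bool)
    (γ M : Fin N → ℚ) :
    ∑ t ∈ pairsOf N r, kostantQ (rootsC N) (fun i => (wAct σ ε γ - M) i + t.1 i - t.2 i) =
      ∑ t ∈ pairsOf N r, kostantQ (rootsC N)
        (wAct σ ε (fun i => γ i + t.2 i - t.1 i) - M) := by
  symm
  refine Finset.sum_nbij' (pairAct σ ε) (pairActInv σ ε) ?_ ?_ ?_ ?_ ?_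
  · intro t ht
    rw [mem_pairsOf] at ht ⊢
    rw [← ht, ← Equiv.sum_comp σ]
    apply Finset.sum_congr rfl
    intro i _
    have hi : σ⁻¹ (σ i) = i := by simp
    simp only [pairAct, hi]
    split_ifs <;> omega
  · intro t ht
    rw [mem_pairsOf] at ht ⊢
    rw [← ht, ← Equiv.sum_comp σ (fun i => t.1 i + t.2 i)]
    apply Finset.sum_congr rfl
    intro i _
    simp only [pairActInv]
    split_ifs <;> omega
  · intro t _
    ext i <;> cases h : ε (σ i) <;> simp [pairAct, pairActInv, h]
  · intro t _
    ext i <;> cases h : ε i <;> simp [pairAct, pairActInv, h]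
  · intro t _
    congr 1
    funext i
    cases h : ε i <;> simp [pairAct, wAct, h] <;> ring

/-- Extension of a permutation by a fixed last point. -/
def extP {N : ℕ} (τ : Equiv.Perm (Fin N)) : Equiv.Perm (Fin (N + 1)) :=
  finSuccEquivLast.symm.permCongr (Equiv.optionCongr τ)

theorem extP_castSucc {N : ℕ} (τ : Equiv.Perm (Fin N)) (i : Fin N) :
    extP τ i.castSucc = (τ i).castSucc := by
  simp [extP, Equiv.permCongr_apply]

theorem extP_last {N : ℕ} (τ : Equiv.Perm (Fin N)) :
    extP τ (Fin.last N) = Fin.last N := by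
  simp [extP, Equiv.permCongr_apply]

theorem extP_inv_castSucc {N : ℕ} (τ : Equiv.Perm (Fin N)) (i : Fin N) :
    (extP τ)⁻¹ i.castSucc = (τ⁻¹ i).castSucc := by
  rw [Equiv.Perm.inv_eq_iff_eq, extP_castSucc]; simp

theorem extP_inv_last {N : ℕ} (τ : Equiv.Perm (Fin N)) :
    (extP τ)⁻¹ (Fin.last N) = Fin.last N := by
  rw [Equiv.Perm.inv_eq_iff_eq, extP_last]

theorem extP_sign {N : ℕ} (τ : Equiv.Perm (Fin N)) :
    Equiv.Perm.sign (extP τ) = Equiv.Perm.sign τ := by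
  simp [extP, Equiv.Perm.sign_permCongr, Equiv.optionCongr_sign]

theorem extP_injective {N : ℕ} : Function.Injective (extP (N := N)) := by
  intro τ τ' h
  ext i
  have := congrArg (fun σ : Equiv.Perm (Fin (N + 1)) => (σ i.castSucc : ℕ)) h
  simpa [extP_castSucc] using this

theorem extP_surj {N : ℕ} (σ : Equiv.Perm (Fin (N + 1))) (h : σ (Fin.last N) = Fin.last N) :
    ∃ τ, extP τ = σ := by
  refine ⟨Equiv.removeNone (finSuccEquivLast.permCongr σ), ?_⟩
  have h0 : (finSuccEquivLast.permCongr σ) none = none := by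
    simp [Equiv.permCongr_apply, h]
  have := Equiv.Perm.decomposeOption.symm_apply_apply (finSuccEquivLast.permCongr σ)
  simp only [Equiv.Perm.decomposeOption_apply, Equiv.Perm.decomposeOption_symm_apply, h0,
    Equiv.swap_self] at this
  have h1 : Equiv.optionCongr (Equiv.removeNone (finSuccEquivLast.permCongr σ)) =
      finSuccEquivLast.permCongr σ := this
  rw [extP, h1]
  ext i
  simp [Equiv.permCongr_apply]

theorem sum_perm_last {N : ℕ} {R : Type*} [AddCommMonoid R] (f : Equiv.Perm (Fin (N + 1)) → R)
    (hf : ∀ σ, σ⁻¹ (Fin.last N) ≠ Fin.last N → f σ = 0) :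
    ∑ σ, f σ = ∑ τ : Equiv.Perm (Fin N), f (extP τ) := by
  symm
  refine Finset.sum_of_injOn extP (extP_injective.injOn) (fun _ _ => by simp) ?_
    (fun _ _ => rfl)
  intro σ _ hσ
  apply hf
  intro h
  apply hσ
  obtain ⟨τ, hτ⟩ := extP_surj σ (Equiv.Perm.inv_eq_iff_eq.mp h).symm
  exact ⟨τ, by simp, hτ⟩

/-- Append a last sign. -/
def snocB {N : ℕ} (η : Fin N → Bool) (b : Bool) : Fin (N + 1) → Bool :=
  Fin.snoc (α := fun _ => Bool) η b

@[simp] theorem snocB_castSucc {N : ℕ} (x : Fin N → Bool) (c : Bool) (i : Fin N) :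
    snocB x c i.castSucc = x i := by simp [snocB]

@[simp] theorem snocB_last {N : ℕ} (x : Fin N → Bool) (c : Bool) :
    snocB x c (Fin.last N) = c := by simp [snocB]

theorem sum_sign_last {N : ℕ} {R : Type*} [AddCommMonoid R] (f : (Fin (N + 1) → Bool) → R)
    (hf : ∀ ε, ε (Fin.last N) = true → f ε = 0) :
    ∑ ε, f ε = ∑ η : Fin N → Bool, f (snocB η false) := by
  symm
  refine Finset.sum_of_injOn (fun η => snocB η false) ?_ (fun _ _ => by simp) ?_
    (fun _ _ => rfl)
  · intro η _ η' _ h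
    funext i
    simpa using congrFun h i.castSucc
  · intro ε _ hε
    apply hf
    by_contra h
    apply hε
    refine ⟨fun i => ε i.castSucc, by simp, ?_⟩
    funext i
    refine Fin.lastCases ?_ ?_ i
    · simpa using h
    · intro i; simp

theorem wDet_ext {N : ℕ} (τ : Equiv.Perm (Fin N)) (η : Fin N → Bool) :
    wDet (extP τ) (snocB η false) = wDet τ η := by
  simp [wDet, extP_sign, Fin.prod_univ_castSucc]

theorem wAct_ext {N : ℕ} (τ : Equiv.Perm (Fin N)) (η : Fin N → Bool) (x : Fin (N + 1) → ℚ) :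
    wAct (extP τ) (snocB η false) x =
      snocQ (wAct τ η (fun i => x i.castSucc)) (x (Fin.last N)) := by
  apply snocQ_ext
  · intro i; simp only [wAct, extP_inv_castSucc, snocB_castSucc, snocQ_castSucc]
  · simp [wAct, extP_inv_last]

theorem KC_reduce {N : ℕ} (x M : Fin (N + 1) → ℚ) (l : ℕ)
    (hx0 : ∀ i, 0 ≤ x i) (hM0 : 0 < M (Fin.last N))
    (hxM : ∀ i : Fin N, x i.castSucc < M (Fin.last N))
    (hl : x (Fin.last N) - M (Fin.last N) = l) :
    altF M x = ∑ p ∈ (Finset.range (l + 1) ×ˢ Finset.range (l + 1)).filter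
        (fun p => p.1 + 2 * p.2 = l),
      (PowerSeries.X : PowerSeries ℤ) ^ (p.1 + p.2) *
        ∑ t ∈ pairsOf N p.1, altF (fun i => M i.castSucc)
          (fun i => x i.castSucc + t.2 i - t.1 i) := by
  have hstep : altF M x = ∑ τ : Equiv.Perm (Fin N), ∑ η : Fin N → Bool,
      wDet τ η • kostantQ (rootsC (N + 1))
        (snocQ (wAct τ η (fun i => x i.castSucc) - fun i => M i.castSucc) l) := by
    unfold altF
    rw [sum_perm_last]
    · apply Finset.sum_congr rfl
      intro τ _
      rw [sum_sign_last]
      · apply Finset.sum_congr rfl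
        intro η _
        rw [wDet_ext, wAct_ext]
        congr 2
        apply snocQ_ext
        · intro i; simp
        · simp [hl]
      · intro ε hε
        rw [kostant_eq_zero, smul_zero]
        have := hx0 (Fin.last N)
        simp [wAct, hε, extP_inv_last]
        linarith
    · intro σ hσ
      apply Finset.sum_eq_zero
      intro ε _
      rw [kostant_eq_zero, smul_zero]
      obtain ⟨j, hj⟩ := Fin.exists_castSucc_eq.mpr hσ
      have h1 := hx0 j.castSucc
      have h2 := hxM j
      simp only [Pi.sub_apply, wAct, ← hj]
      split_ifs <;> linarith
  rw [hstep]
  simp only [kostant_step, topIdx, Finset.sum_sigma, ← Finset.mul_sum, sum_pairs_wAct]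
  unfold altF
  simp only [Finset.mul_sum, Finset.smul_sum]
  rw [Finset.sum_congr rfl (fun τ _ => Finset.sum_comm), Finset.sum_comm]
  apply Finset.sum_congr rfl
  intro p _
  rw [Finset.sum_congr rfl (fun τ _ => Finset.sum_comm), Finset.sum_comm]
  apply Finset.sum_congr rfl
  intro t _
  apply Finset.sum_congr rfl
  intro τ _
  apply Finset.sum_congr rfl
  intro η _
  rw [mul_smul_comm]

/-- The weight `γ + k̄ - k`. -/
def lamOf {N : ℕ} (γ : Fin N → ℤ) (t : (Fin N → ℕ) × (Fin N → ℕ)) : Fin N → ℚ :=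
  fun i => (γ i : ℚ) + t.2 i - t.1 i

/-- The shifted weight. -/
def shiftRho {N : ℕ} (γ : Fin N → ℤ) : Fin N → ℤ := fun i => γ i + ((i : ℕ) : ℤ) + 1

theorem cPieri_pred {N : ℕ} (γ : Fin N → ℤ) (hγ0 : ∀ i, 0 ≤ γ i)
    (r : ℕ) (lam : Fin N → ℚ) (t : (Fin N → ℕ) × (Fin N → ℕ)) :
    (t ∈ pairsOf N r ∧ PieriCond (shiftRho γ) t) ∧ lamOf γ t = lam ↔
    (∑ i, (t.1 i + t.2 i)) = r ∧
    (∀ i, ((t.2 i : ℚ) - (t.1 i : ℚ)) = lam i - (γ i : ℚ)) ∧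
    (∀ i : Fin N, ∀ h : (i : ℕ) + 1 < N,
      lam i ≤ lam ⟨(i : ℕ) + 1, h⟩ - (t.2 ⟨(i : ℕ) + 1, h⟩ : ℚ)) ∧
    (∀ i : Fin N, ∀ h : (i : ℕ) + 1 < N,
      lam i + (t.1 i : ℚ) - (t.2 i : ℚ) ≤
        lam ⟨(i : ℕ) + 1, h⟩ - (t.2 ⟨(i : ℕ) + 1, h⟩ : ℚ)) ∧
    (∀ h : 0 < N, (0 : ℚ) ≤ lam ⟨0, h⟩ - (t.2 ⟨0, h⟩ : ℚ)) := by
  rw [mem_pairsOf]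
  constructor
  · rintro ⟨⟨h, hP, hQ, hR⟩, rfl⟩
    refine ⟨h, ?_, ?_, ?_, ?_⟩
    · intro i; simp only [lamOf]; ring
    · intro i hi
      have := hR i hi
      simp only [shiftBy, shiftRho, Fin.eta] at this
      have h' : γ i + t.2 i - t.1 i + t.1 ⟨(i : ℕ) + 1, hi⟩ ≤ γ ⟨(i : ℕ) + 1, hi⟩ := by
        push_cast at this; omega
      have h'' : ((γ i : ℚ) + t.2 i - t.1 i + t.1 ⟨(i : ℕ) + 1, hi⟩ ≤ γ ⟨(i : ℕ) + 1, hi⟩) := by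
        exact_mod_cast h'
      simp only [lamOf]
      linarith
    · intro i hi
      have := hQ i hi
      simp only [shiftRho, Fin.eta] at this
      have h' : γ i + t.1 ⟨(i : ℕ) + 1, hi⟩ ≤ γ ⟨(i : ℕ) + 1, hi⟩ := by
        push_cast at this; omega
      have h'' : ((γ i : ℚ) + t.1 ⟨(i : ℕ) + 1, hi⟩ ≤ γ ⟨(i : ℕ) + 1, hi⟩) := by
        exact_mod_cast h'
      simp only [lamOf]
      linarith
    · intro hN
      have := hP ⟨0, hN⟩
      simp only [shiftRho] at this
      have h' : (t.1 ⟨0, hN⟩ : ℤ) ≤ γ ⟨0, hN⟩ := by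
        push_cast at this; omega
      have h'' : ((t.1 ⟨0, hN⟩ : ℚ) ≤ γ ⟨0, hN⟩) := by
        exact_mod_cast h'
      simp only [lamOf]
      linarith
  · rintro ⟨h, hl, hR, hQ, hP⟩
    obtain rfl : lamOf γ t = lam := by
      funext i; have := hl i; simp only [lamOf]; linarith
    have hQ' : ∀ i : Fin N, ∀ hi : (i : ℕ) + 1 < N,
        γ i + t.1 ⟨(i : ℕ) + 1, hi⟩ ≤ γ ⟨(i : ℕ) + 1, hi⟩ := by
      intro i hi
      have := hQ i hi
      simp only [lamOf] at this
      have h'' : ((γ i : ℚ) + t.1 ⟨(i : ℕ) + 1, hi⟩ ≤ γ ⟨(i : ℕ) + 1, hi⟩) := by linarith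
      exact_mod_cast h''
    refine ⟨⟨h, ?_, ?_, ?_⟩, rfl⟩
    · rintro ⟨i, hi⟩
      simp only [shiftRho]
      rcases i with _ | i
      · have := hP hi
        simp only [lamOf] at this
        have h'' : ((t.1 ⟨0, hi⟩ : ℚ) ≤ γ ⟨0, hi⟩) := by linarith
        have h' : (t.1 ⟨0, hi⟩ : ℤ) ≤ γ ⟨0, hi⟩ := by exact_mod_cast h''
        push_cast; omega
      · have h1 := hQ' ⟨i, by omega⟩ hi
        have h2 := hγ0 ⟨i, by omega⟩
        simp only at h1
        push_cast; omega
    · intro i hi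
      have := hQ' ⟨i, by omega⟩ hi
      simp only [shiftRho]
      simp only at this
      push_cast; omega
    · intro i hi
      have := hR ⟨i, by omega⟩ hi
      simp only [lamOf] at this
      have h'' : ((γ ⟨i, by omega⟩ : ℚ) + t.2 ⟨i, by omega⟩ - t.1 ⟨i, by omega⟩ + t.1 ⟨i + 1, hi⟩
          ≤ γ ⟨i + 1, hi⟩) := by
        linarith
      have h' : γ ⟨i, by omega⟩ + t.2 ⟨i, by omega⟩ - t.1 ⟨i, by omega⟩ + t.1 ⟨i + 1, hi⟩
          ≤ γ ⟨i + 1, hi⟩ := by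
        exact_mod_cast h''
      simp only [shiftBy, shiftRho]
      push_cast; omega

open Classical in
theorem cPieri_card {N : ℕ} (γ : Fin N → ℤ) (hγ0 : ∀ i, 0 ≤ γ i) (r : ℕ) (lam : Fin N → ℚ) :
    cPieri (fun i => (γ i : ℚ)) lam r =
      (((pairsOf N r).filter (PieriCond (shiftRho γ))).filter
        (fun t => lamOf γ t = lam)).card := by
  unfold cPieri
  apply Nat.subtype_card
  intro t
  rw [Finset.mem_filter, Finset.mem_filter]
  exact cPieri_pred γ hγ0 r lam t

theorem dominant_of_pieri {N : ℕ} (γ : Fin N → ℤ) (hγ0 : ∀ i, 0 ≤ γ i) (r : ℕ)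
    (t : (Fin N → ℕ) × (Fin N → ℕ)) (h : t ∈ pairsOf N r) (h' : PieriCond (shiftRho γ) t) :
    DominantC (lamOf γ t) := by
  obtain ⟨-, -, hR, -, hP⟩ := (cPieri_pred γ hγ0 r _ t).mp ⟨⟨h, h'⟩, rfl⟩
  rcases N with _ | N
  · exact ⟨fun i => i.elim0, fun i => i.elim0, fun i => i.elim0⟩
  · have hm : Monotone (lamOf γ t) := by
      rw [Fin.monotone_iff_le_succ]
      intro i
      have h1 := hR i.castSucc (by simp)
      have h2 : (0 : ℚ) ≤ (t.2 i.succ : ℚ) := by positivity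
      change _ ≤ lamOf γ t i.succ - (t.2 i.succ : ℚ) at h1
      linarith
    refine ⟨hm, ?_, ?_⟩
    · intro i
      have h1 := hP (by omega)
      have h2 : (0 : ℚ) ≤ (t.2 ⟨0, by omega⟩ : ℚ) := by positivity
      have h3 := hm (Fin.zero_le i)
      change _ ≤ lamOf γ t 0 - _ at h1
      linarith
    · intro i
      exact ⟨γ i + t.2 i - t.1 i, by simp [lamOf]⟩

open Classical in
theorem pieri_finsum {N : ℕ} (γ : Fin N → ℤ) (hγ0 : ∀ i, 0 ≤ γ i) (r : ℕ)
    (G : (Fin N → ℚ) → PowerSeries ℤ) :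
    ∑ t ∈ (pairsOf N r).filter (PieriCond (shiftRho γ)), G (lamOf γ t) =
      ∑ᶠ lam ∈ {lam : Fin N → ℚ | DominantC lam},
        (cPieri (fun i => (γ i : ℚ)) lam r : ℤ) • G lam := by
  rw [finsum_mem_eq_sum_of_inter_support_eq (t := ((pairsOf N r).filter
    (PieriCond (shiftRho γ))).image (lamOf γ)), Finset.sum_comp]
  · apply Finset.sum_congr rfl
    intro lam _
    rw [cPieri_card γ hγ0, natCast_zsmul]
  · ext lam
    simp only [Set.mem_inter_iff, Set.mem_ofPred_eq, Function.mem_support, Finset.coe_image,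
      and_congr_left_iff]
    intro hne
    constructor
    · intro _
      have : cPieri (fun i => (γ i : ℚ)) lam r ≠ 0 := by
        intro h; apply hne; rw [h]; simp
      rw [cPieri_card γ hγ0] at this
      obtain ⟨t, ht⟩ := Finset.card_ne_zero.mp this
      rw [Finset.mem_filter] at ht
      exact ⟨t, ht.1, ht.2⟩
    · rintro ⟨t, ht, rfl⟩
      have ht := Finset.mem_filter.mp (Finset.mem_coe.mp ht)
      exact dominant_of_pieri γ hγ0 r t ht.1 ht.2

theorem powerSeries_eq_neg (x : PowerSeries ℤ) (h : x = -x) : x = 0 := by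
  ext k
  have := congrArg (PowerSeries.coeff k) h
  simp only [map_neg, map_zero] at this ⊢
  omega

theorem main_aux (N : ℕ) (ν μ : Fin (N + 1) → ℤ)
    (hν : Monotone ν) (hν0 : ∀ i, 0 ≤ ν i) (hμ0 : ∀ i, 0 ≤ μ i)
    (h1 : ∀ i : Fin N, ν i.castSucc ≤ μ (Fin.last N))
    (h2 : μ (Fin.last N) ≤ ν (Fin.last N)) :
    KC (N + 1) (fun i => (ν i : ℚ)) (fun i => (μ i : ℚ)) =
      ∑ p ∈ Finset.range ((ν (Fin.last N) - μ (Fin.last N)).toNat + 1) ×ˢ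
            Finset.range ((ν (Fin.last N) - μ (Fin.last N)).toNat + 1),
        if p.1 + 2 * p.2 = (ν (Fin.last N) - μ (Fin.last N)).toNat then
          (PowerSeries.X : PowerSeries ℤ) ^ (p.1 + p.2) *
            ∑ᶠ lam ∈ {lam : Fin N → ℚ | DominantC lam},
              (cPieri (fun i : Fin N => (ν i.castSucc : ℚ)) lam p.1 : ℤ) •
                KC N lam (fun i : Fin N => (μ i.castSucc : ℚ))
        else 0 := by
  classical
  rw [← Finset.sum_filter]
  have hcast : (((ν (Fin.last N) - μ (Fin.last N)).toNat : ℕ) : ℚ) =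
      (ν (Fin.last N) : ℚ) - μ (Fin.last N) := by
    have : (((ν (Fin.last N) - μ (Fin.last N)).toNat : ℕ) : ℤ) =
      ν (Fin.last N) - μ (Fin.last N) := Int.toNat_of_nonneg (by omega)
    exact_mod_cast this
  have hKC : ∀ (n : ℕ) (lam mu : Fin n → ℚ), KC n lam mu = altF (mu + rhoC n) (lam + rhoC n) :=
    fun _ _ _ => rfl
  rw [hKC, KC_reduce _ _ (ν (Fin.last N) - μ (Fin.last N)).toNat]
  · apply Finset.sum_congr rfl
    intro p _
    congr 1
    set γ : Fin N → ℤ := fun i => ν i.castSucc with hγ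
    have hγ0 : ∀ i, 0 ≤ γ i := fun i => hν0 _
    rw [← pieri_finsum γ hγ0 p.1 (fun lam => KC N lam (fun i : Fin N => (μ i.castSucc : ℚ)))]
    have hs := pieri_sum powerSeries_eq_neg p.1 (shiftRho γ) ?_ ?_
      (fun x => altF ((fun i : Fin N => (μ i.castSucc : ℚ)) + rhoC N) (fun i => (x i : ℚ))) ?_ ?_
    · have hM : (fun i : Fin N => ((fun i => (μ i : ℚ)) + rhoC (N + 1)) i.castSucc) =
          (fun i : Fin N => (μ i.castSucc : ℚ)) + rhoC N := by
        funext i; simp [rhoC]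
      rw [hM]
      refine Eq.trans ?_ (hs.trans ?_)
      · apply Finset.sum_congr rfl
        intro t _
        congr 1
        funext i
        simp [shiftBy, shiftRho, rhoC, hγ]
        ring
      · apply Finset.sum_congr rfl
        intro t _
        rw [hKC]
        congr 1
        funext i
        simp [shiftBy, shiftRho, rhoC, lamOf]
        ring
    · intro i j hij
      have := hν (show i.castSucc ≤ j.castSucc from by simpa using hij.le)
      have h' : (i : ℕ) < j := hij
      simp only [shiftRho, hγ]
      omega
    · intro i
      have := hγ0 i
      simp only [shiftRho]
      omega
    · intro x i
      rw [← altF_neg _ _ i]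
      congr 1
      funext j
      by_cases hj : j = i
      · subst hj; simp
      · simp [hj]
    · intro x i j hij
      rw [← altF_swap _ _ i j hij]
      rfl
  · intro i
    have : (0 : ℚ) ≤ ν i := by exact_mod_cast hν0 i
    simp only [Pi.add_apply, rhoC]
    positivity
  · have : (0 : ℚ) ≤ μ (Fin.last N) := by exact_mod_cast hμ0 _
    simp only [Pi.add_apply, rhoC]
    positivity
  · intro i
    have h3 : (ν i.castSucc : ℚ) ≤ μ (Fin.last N) := by exact_mod_cast h1 i
    have h4 : ((i : ℕ) : ℚ) < N := by exact_mod_cast i.2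
    simp only [Pi.add_apply, rhoC, Fin.val_castSucc, Fin.val_last]
    linarith
  · rw [hcast]
    simp only [Pi.add_apply]
    ring

/-- If `μ_n ≥ ν_{n-1}` and `l = ν_n - μ_n ≥ 0` then
`K^{C_n}_{ν,μ}(q) = ∑_{r+2m=l} q^{r+m} ∑_λ c^λ_{ν',r} K^{C_{n-1}}_{λ,μ'}(q)`. -/
theorem KC_top_row_reduction (n : ℕ) (hn : 2 ≤ n) (ν μ : Fin n → ℤ)
    (hν : Monotone ν) (hν0 : ∀ i, 0 ≤ ν i)
    (hμ : Monotone μ) (hμ0 : ∀ i, 0 ≤ μ i)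
    (h1 : ν ⟨n - 2, by omega⟩ ≤ μ ⟨n - 1, by omega⟩)
    (h2 : μ ⟨n - 1, by omega⟩ ≤ ν ⟨n - 1, by omega⟩) :
    KC n (fun i => (ν i : ℚ)) (fun i => (μ i : ℚ)) =
      ∑ p ∈ Finset.range ((ν ⟨n - 1, by omega⟩ - μ ⟨n - 1, by omega⟩).toNat + 1) ×ˢ
            Finset.range ((ν ⟨n - 1, by omega⟩ - μ ⟨n - 1, by omega⟩).toNat + 1),
        if p.1 + 2 * p.2 = (ν ⟨n - 1, by omega⟩ - μ ⟨n - 1, by omega⟩).toNat then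
          (PowerSeries.X : PowerSeries ℤ) ^ (p.1 + p.2) *
            ∑ᶠ lam ∈ {lam : Fin (n - 1) → ℚ | DominantC lam},
              (cPieri (restrict1 fun i => (ν i : ℚ)) lam p.1 : ℤ) •
                KC (n - 1) lam (restrict1 fun i => (μ i : ℚ))
        else 0 := by

  obtain ⟨N, rfl⟩ : ∃ N, n = N + 1 := ⟨n - 1, by omega⟩
  refine main_aux N ν μ hν hν0 hμ0 (fun i => le_trans (hν ?_) h1) h2
  rw [Fin.le_def]
  simp only [Fin.val_castSucc]
  omega
end
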